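/- Let ω ≥ 1 be an integer and δ ∈ (0,1/8) be fixed, and let η > 0. The series ζ_{E₁}(s) = Σ_{k≥1} E_{1,k}(s) converges absolutely and locally uniformly on the strip {s ∈ ℂ : 1 < Re(s) < 2}, and its sum extends to a meromorphic function on the half-plane {Re(s) > -1/2} which is holomorphic at s = 0. Moreover, for fixed ω and δ, the derivative at 0 of this extension satisfies ζ_{E₁}'(0) = 2ω·(-ζ(-1) - ζ'(-1) + ζ(-1)·log(2ω)) + (ω/6)·log(η) + o(1) as η → 0⁺. -/

import Mathlib

open MeasureTheory Filter

/-- The error integral `E_{1,k}(s)` for the model hyperbolic cone of angle `2π/ω` and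
boundary parameter `η`:
`E_{1,k}(s) = (2 sin(πs)/π) · kω · ∫_{k^{δ-1}/ω}^{∞} (k²ω²u² - 1/4)^{-s} ·
  (log(u·cosh η + √(1 + u² sinh(η)²)) - log(u+1)) du`. -/
noncomputable def coneE1 (ω : ℕ) (η δ : ℝ) (k : ℕ) (s : ℂ) : ℂ :=
  (2 * Complex.sin ((Real.pi : ℂ) * s) / (Real.pi : ℂ)) * ((k : ℂ) * (ω : ℂ)) *
    ∫ u in Set.Ioi ((k : ℝ) ^ (δ - 1) / ω),
      (((k : ℝ) ^ 2 * (ω : ℝ) ^ 2 * u ^ 2 - 1 / 4 : ℝ) : ℂ) ^ (-s) *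
        ((Real.log (u * Real.cosh η + Real.sqrt (1 + u ^ 2 * Real.sinh η ^ 2)) -
          Real.log (u + 1) : ℝ) : ℂ)

/-!
For `t ≥ 1` write `(t² - 1/4)⁻ˢ = t⁻²ˢ + (s/4) t⁻²ˢ⁻² + r(s, t)` with `r(s, t) = O(t⁻²ˢ⁻⁴)`. The
remainder contributes a series that is holomorphic for `Re s > -1` and vanishes at `s = 0`. In the
power terms the scale `k ω` factors out of the integral: up to the piece below the cutoff, the
`k`-th integral is `(k ω)¹⁻²ˢ` times the Mellin transform of the logarithmic factor `g` at `2s`, so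
its series is this Mellin transform times `ω¹⁻²ˢ ζ(2s - 1)`. Since `g u = c u + O(u³)` at `0`, the
piece below the cutoff gives a multiple of `ζ(1 - δ (2 - 2s))` and a convergent series.

At `s = 0` the zero of `sin(π s)` cancels the pole of the Mellin transform, whose residue comes from
`g u = α + β / u + O(u⁻²)` at infinity; in the second power term the extra factor `s` takes care of
the double pole. As `η → 0` the constants `c`, `α` and the implied constant at `0` tend to `0`,
while `β = -1`. What survives of the derivative is `-Z'(0) + 2 Z(0) ∫₁^∞ (g u - α - β / u) du`,
where `Z(s) = ω¹⁻²ˢ ζ(2s - 1)`, and the integral is `-1 + log 2 + η - log (sinh η)`.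
-/

namespace ConeZeta

open Set Topology

/-! ### Holomorphic series and parameter integrals -/

section NormallySummable

variable {ι X E : Type*} [TopologicalSpace X] [NormedAddCommGroup E]

/-- The Weierstrass condition at a point: near `s` the family `f` is dominated by one summable
family of constants. -/
def NormallySummableAt (f : ι → X → E) (s : X) : Prop :=
  ∃ M : ι → ℝ, Summable M ∧ ∀ᶠ z in 𝓝 s, ∀ i, ‖f i z‖ ≤ M i

namespace NormallySummableAt

theorem summable_norm {f : ι → X → E} {s : X} (hf : NormallySummableAt f s) :
    Summable fun i => ‖f i s‖ :=
  let ⟨_, hM, hfM⟩ := hf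
  hM.of_nonneg_of_le (fun _ => norm_nonneg _) hfM.self_of_nhds

theorem mul_left {R : Type*} [NormedRing R] {f : ι → X → R} {h : X → R} {s : X}
    (hh : ContinuousAt h s) (hf : NormallySummableAt f s) :
    NormallySummableAt (fun i z => h z * f i z) s := by
  obtain ⟨M, hM, hfM⟩ := hf
  refine ⟨fun i => (‖h s‖ + 1) * M i, hM.mul_left _, ?_⟩
  filter_upwards [hfM, hh.norm.eventually_lt_const (lt_add_one ‖h s‖)] with z hz hhz i
  exact (norm_mul_le _ _).trans (by gcongr; exact hz i)

theorem tendstoLocallyUniformlyOn [CompleteSpace E] {f : ℕ → X → E} {S : Set X}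
    (hf : ∀ s ∈ S, NormallySummableAt f s) :
    TendstoLocallyUniformlyOn (fun n z => ∑ i ∈ Finset.range n, f i z)
      (fun z => ∑' i, f i z) atTop S := by
  intro U hU s hs
  obtain ⟨M, hM, hfM⟩ := hf s hs
  exact ⟨{z | ∀ i, ‖f i z‖ ≤ M i}, mem_nhdsWithin_of_mem_nhds hfM,
    tendstoUniformlyOn_tsum_nat (s := {z | ∀ i, ‖f i z‖ ≤ M i}) hM (fun i _ hz => hz i) U hU⟩

theorem analyticAt_tsum {f : ι → ℂ → ℂ} {s : ℂ} (hf : NormallySummableAt f s)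
    (hd : ∀ᶠ z in 𝓝 s, ∀ i, DifferentiableAt ℂ (f i) z) :
    AnalyticAt ℂ (fun z => ∑' i, f i z) s := by
  obtain ⟨M, hM, hfM⟩ := hf
  obtain ⟨U, hU, hUo, hsU⟩ := eventually_nhds_iff.1 (hfM.and hd)
  exact (Complex.differentiableOn_tsum_of_summable_norm hM
    (fun i z hz => ((hU z hz).2 i).differentiableWithinAt) hUo
    fun i z hz => (hU z hz).1 i).analyticAt (hUo.mem_nhds hsU)

end NormallySummableAt

end NormallySummable

section ParameterIntegral

variable {α E : Type*} [MeasurableSpace α] {μ : Measure α} [NormedAddCommGroup E]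

theorem aestronglyMeasurable_deriv_param {𝕜 : Type*} [NontriviallyNormedField 𝕜]
    [NormedSpace 𝕜 E] {f : 𝕜 → α → E} {s : 𝕜}
    (hmeas : ∀ᶠ z in 𝓝 s, AEStronglyMeasurable (f z) μ)
    (hdiff : ∀ᵐ u ∂μ, DifferentiableAt 𝕜 (fun z => f z u) s) :
    AEStronglyMeasurable (fun u => deriv (fun z => f z u) s) μ := by
  obtain ⟨x, hx, hxm⟩ := exists_seq_forall_of_frequently
    (hmeas.filter_mono (nhdsWithin_le_nhds (s := {s}ᶜ))).frequently
  refine aestronglyMeasurable_of_tendsto_ae atTop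
    (f := fun n u => slope (fun z => f z u) s (x n)) (fun n => ?_) ?_
  · simp only [slope_def_module]
    exact ((hxm n).sub hmeas.self_of_nhds).const_smul _
  · filter_upwards [hdiff] with u hu
    exact (hasDerivAt_iff_tendsto_slope.1 hu.hasDerivAt).comp hx

variable [NormedSpace ℂ E]

theorem norm_deriv_le_of_norm_le_ball {f : ℂ → E} {s z : ℂ} {r b : ℝ} (hr : 0 < r)
    (hf : DifferentiableOn ℂ f (Metric.ball s (2 * r)))
    (hb : ∀ w ∈ Metric.ball s (2 * r), ‖f w‖ ≤ b) (hz : z ∈ Metric.ball s r) :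
    ‖deriv f z‖ ≤ b / (r / 2) := by
  have hsub : Metric.closedBall z (r / 2) ⊆ Metric.ball s (2 * r) :=
    Metric.closedBall_subset_ball' (by linarith [Metric.mem_ball.1 hz])
  refine Complex.norm_deriv_le_of_forall_mem_sphere_norm_le (half_pos hr) ?_ fun w hw =>
    hb w (hsub (Metric.sphere_subset_closedBall hw))
  exact (hf.mono hsub).diffContOnCl_ball subset_rfl

theorem differentiableAt_integral_of_dominated {f : ℂ → α → E} {s : ℂ} {U : Set ℂ}
    {bound : α → ℝ} (hU : U ∈ 𝓝 s) (hbound : Integrable bound μ)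
    (hmeas : ∀ z ∈ U, AEStronglyMeasurable (f z) μ)
    (hdiff : ∀ᵐ u ∂μ, DifferentiableOn ℂ (fun z => f z u) U)
    (hle : ∀ᵐ u ∂μ, ∀ z ∈ U, ‖f z u‖ ≤ bound u) :
    DifferentiableAt ℂ (fun z => ∫ u, f z u ∂μ) s := by
  obtain ⟨ε, hε, hεU⟩ := Metric.mem_nhds_iff.1 hU
  obtain ⟨r, hr, rfl⟩ : ∃ r, 0 < r ∧ ε = 2 * r := ⟨ε / 2, half_pos hε, by ring⟩
  have hsU : s ∈ U := mem_of_mem_nhds hU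
  have hball : Metric.ball s r ⊆ Metric.ball s (2 * r) := Metric.ball_subset_ball (by linarith)
  have hdiffAt : ∀ᵐ u ∂μ, ∀ z ∈ Metric.ball s r, DifferentiableAt ℂ (fun z => f z u) z := by
    filter_upwards [hdiff] with u hu z hz
    exact hu.differentiableAt (mem_of_superset (Metric.isOpen_ball.mem_nhds (hball hz)) hεU)
  refine (hasDerivAt_integral_of_dominated_loc_of_deriv_le (Metric.ball_mem_nhds s hr)
    (F' := fun z u => deriv (fun z => f z u) z) (eventually_of_mem hU hmeas)
    (hbound.mono' (hmeas s hsU) (hle.mono fun u hu => hu s hsU))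
    (aestronglyMeasurable_deriv_param (eventually_of_mem hU hmeas)
      (hdiffAt.mono fun u hu => hu s (Metric.mem_ball_self hr)))
    ?_ (hbound.div_const (r / 2)) ?_).2.differentiableAt
  · filter_upwards [hdiff, hle] with u hdu hbu z hz
    exact norm_deriv_le_of_norm_le_ball hr (hdu.mono hεU) (fun w hw => hbu w (hεU hw)) hz
  · exact hdiffAt.mono fun u hu z hz => (hu z hz).hasDerivAt

end ParameterIntegral

theorem norm_ofReal_cpow_neg_mul_le {u K m : ℝ} {x : ℂ} (hu : 0 < u) (hx : ‖x‖ ≤ K * u ^ m)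
    (w : ℂ) : ‖(u : ℂ) ^ (-w) * x‖ ≤ K * u ^ (m - w.re) := by
  rw [norm_mul, Complex.norm_cpow_eq_rpow_re_of_pos hu, Complex.neg_re]
  calc u ^ (-w.re) * ‖x‖ ≤ u ^ (-w.re) * (K * u ^ m) := by gcongr
    _ = K * u ^ (m - w.re) := by rw [sub_eq_add_neg, Real.rpow_add hu]; ring

section CpowIntegral

variable {E : Set ℝ} {f : ℝ → ℂ} {K m : ℝ} {w : ℂ}

theorem aestronglyMeasurable_cpow_mul (hE : MeasurableSet E) (hE0 : E ⊆ Ioi 0)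
    (hf : ContinuousOn f E) (w : ℂ) :
    AEStronglyMeasurable (fun u : ℝ => (u : ℂ) ^ (-w) * f u) (volume.restrict E) :=
  ContinuousOn.aestronglyMeasurable (.mul (fun _ hu => (Complex.continuousAt_ofReal_cpow_const _ _
    (.inr (hE0 hu).ne')).continuousWithinAt) hf) hE

theorem integrableOn_cpow_mul_of_norm_le (hE : MeasurableSet E) (hE0 : E ⊆ Ioi 0)
    (hf : ContinuousOn f E) (hle : ∀ u ∈ E, ‖f u‖ ≤ K * u ^ m)
    (hint : IntegrableOn (fun u => u ^ (m - w.re)) E) :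
    IntegrableOn (fun u : ℝ => (u : ℂ) ^ (-w) * f u) E :=
  (hint.const_mul K).mono' (aestronglyMeasurable_cpow_mul hE hE0 hf w) <|
    (ae_restrict_iff' hE).2 <| ae_of_all _ fun u hu =>
      norm_ofReal_cpow_neg_mul_le (hE0 hu) (hle u hu) w

theorem norm_integral_cpow_mul_le (hE : MeasurableSet E) (hE0 : E ⊆ Ioi 0)
    (hle : ∀ u ∈ E, ‖f u‖ ≤ K * u ^ m) (hint : IntegrableOn (fun u => u ^ (m - w.re)) E) :
    ‖∫ u in E, (u : ℂ) ^ (-w) * f u‖ ≤ K * ∫ u in E, u ^ (m - w.re) := by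
  rw [← integral_const_mul]
  exact norm_integral_le_of_norm_le (hint.const_mul K) <|
    (ae_restrict_iff' hE).2 <| ae_of_all _ fun u hu =>
      norm_ofReal_cpow_neg_mul_le (hE0 hu) (hle u hu) w

theorem differentiableAt_integral_cpow_mul (hE : MeasurableSet E) (hE0 : E ⊆ Ioi 0)
    (hf : ContinuousOn f E) (hle : ∀ u ∈ E, ‖f u‖ ≤ K * u ^ m) {p q : ℝ}
    (hintp : IntegrableOn (fun u => u ^ (m - p)) E)
    (hintq : IntegrableOn (fun u => u ^ (m - q)) E) (hp : p < w.re) (hq : w.re < q) :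
    DifferentiableAt ℂ (fun z => ∫ u in E, (u : ℂ) ^ (-z) * f u) w := by
  have hU : {z : ℂ | p < z.re ∧ z.re < q} ∈ 𝓝 w :=
    ((isOpen_lt continuous_const Complex.continuous_re).inter
      (isOpen_lt Complex.continuous_re continuous_const)).mem_nhds ⟨hp, hq⟩
  refine differentiableAt_integral_of_dominated hU ((hintp.add hintq).const_mul |K|)
    (fun z _ => aestronglyMeasurable_cpow_mul hE hE0 hf z) ?_ ?_
  · filter_upwards [ae_restrict_mem hE] with u hu
    have hu0 : (u : ℂ) ≠ 0 := Complex.ofReal_ne_zero.2 (hE0 hu).ne'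
    exact fun z _ => ((differentiableAt_id.neg.const_cpow (.inl hu0)).mul_const
      _).differentiableWithinAt
  · filter_upwards [ae_restrict_mem hE] with u hu z hz
    have hu0 : 0 < u := hE0 hu
    have hmp := Real.rpow_nonneg hu0.le (m - p)
    have hmq := Real.rpow_nonneg hu0.le (m - q)
    have hpow : u ^ (m - z.re) ≤ u ^ (m - p) + u ^ (m - q) := by
      rcases le_total 1 u with h | h
      · linarith [Real.rpow_le_rpow_of_exponent_le h (sub_le_sub_left hz.1.le m)]
      · linarith [Real.rpow_le_rpow_of_exponent_ge hu0 h (sub_le_sub_left hz.2.le m)]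
    calc ‖(u : ℂ) ^ (-z) * f u‖ ≤ K * u ^ (m - z.re) :=
          norm_ofReal_cpow_neg_mul_le hu0 (hle u hu) z
      _ ≤ |K| * (u ^ (m - p) + u ^ (m - q)) := by gcongr; exact le_abs_self K

end CpowIntegral

/-! ### Mellin transforms of profiles -/

theorem integrableOn_Ioc_rpow {a r : ℝ} (hr : -1 < r) :
    IntegrableOn (fun u : ℝ => u ^ r) (Ioc 0 a) :=
  (intervalIntegral.intervalIntegrable_rpow' hr).1

/-- A function on `(0, ∞)` with the expansions `g u = c u + O(u³)`, with constant `K`, and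
`g u = α + β / u + O(u⁻²)` at infinity, with constant `L`. -/
structure Profile where
  g : ℝ → ℝ
  c : ℝ
  K : ℝ
  α : ℝ
  β : ℝ
  L : ℝ
  continuousOn_g : ContinuousOn g (Ioi 0)
  abs_sub_linear_le : ∀ u, 0 < u → |g u - c * u| ≤ K * u ^ 3
  abs_sub_limit_le : ∀ u, 1 ≤ u → |g u - α - β / u| ≤ L / u ^ 2

namespace Profile

variable (P : Profile) {w : ℂ} {a : ℝ}

/-- `∫₀ᵃ u⁻ʷ (g u - c u) du`, holomorphic for `Re w < 4`. -/
noncomputable def near (w : ℂ) (a : ℝ) : ℂ :=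
  ∫ u in Ioc 0 a, (u : ℂ) ^ (-w) * ((P.g u - P.c * u : ℝ) : ℂ)

/-- `∫₁^∞ u⁻ʷ (g u - α - β / u) du`, holomorphic for `Re w > -1`. -/
noncomputable def far (w : ℂ) : ℂ :=
  ∫ u in Ioi (1 : ℝ), (u : ℂ) ^ (-w) * ((P.g u - P.α - P.β / u : ℝ) : ℂ)

/-- The continuation to `-1 < Re w < 4` of the Mellin integral `∫₀^∞ u⁻ʷ (g u - c u) du`, which
converges for `2 < Re w < 4`. -/
noncomputable def mellin (w : ℂ) : ℂ :=
  P.near w 1 + P.far w - P.c / (w - 2) + P.α / (w - 1) + P.β / w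

theorem norm_sub_linear_le : ∀ u ∈ Ioc 0 a,
    ‖((P.g u - P.c * u : ℝ) : ℂ)‖ ≤ P.K * u ^ (3 : ℝ) := fun u hu => by
  rw [Complex.norm_real, Real.norm_eq_abs]
  exact_mod_cast P.abs_sub_linear_le u hu.1

theorem norm_sub_limit_le : ∀ u ∈ Ioi (1 : ℝ),
    ‖((P.g u - P.α - P.β / u : ℝ) : ℂ)‖ ≤ P.L * u ^ (-2 : ℝ) := fun u hu => by
  rw [Complex.norm_real, Real.norm_eq_abs, Real.rpow_neg (zero_lt_one.trans hu).le,
    ← div_eq_mul_inv]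
  exact_mod_cast P.abs_sub_limit_le u (le_of_lt hu)

theorem continuousOn_sub_linear :
    ContinuousOn (fun u => ((P.g u - P.c * u : ℝ) : ℂ)) (Ioi 0) :=
  Complex.continuous_ofReal.comp_continuousOn (P.continuousOn_g.sub (by fun_prop))

theorem continuousOn_sub_limit :
    ContinuousOn (fun u => ((P.g u - P.α - P.β / u : ℝ) : ℂ)) (Ioi 1) :=
  Complex.continuous_ofReal.comp_continuousOn
    (((P.continuousOn_g.mono (Ioi_subset_Ioi zero_le_one)).sub continuousOn_const).sub
      (continuousOn_const.div continuousOn_id fun _ hu => (zero_lt_one.trans hu).ne'))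

theorem integrableOn_near (hw : w.re < 4) :
    IntegrableOn (fun u : ℝ => (u : ℂ) ^ (-w) * ((P.g u - P.c * u : ℝ) : ℂ)) (Ioc 0 a) :=
  integrableOn_cpow_mul_of_norm_le measurableSet_Ioc Ioc_subset_Ioi_self
    (P.continuousOn_sub_linear.mono Ioc_subset_Ioi_self) P.norm_sub_linear_le
    (integrableOn_Ioc_rpow (by linarith))

theorem integrableOn_far (hw : -1 < w.re) :
    IntegrableOn (fun u : ℝ => (u : ℂ) ^ (-w) * ((P.g u - P.α - P.β / u : ℝ) : ℂ)) (Ioi 1) :=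
  integrableOn_cpow_mul_of_norm_le measurableSet_Ioi (Ioi_subset_Ioi zero_le_one)
    P.continuousOn_sub_limit P.norm_sub_limit_le
    (integrableOn_Ioi_rpow_of_lt (by linarith) one_pos)

theorem norm_near_le (hw : w.re < 4) (ha : 0 ≤ a) :
    ‖P.near w a‖ ≤ P.K * (a ^ (4 - w.re) / (4 - w.re)) := by
  refine (norm_integral_cpow_mul_le measurableSet_Ioc Ioc_subset_Ioi_self P.norm_sub_linear_le
    (integrableOn_Ioc_rpow (by linarith))).trans_eq ?_
  rw [← intervalIntegral.integral_of_le ha, integral_rpow (.inl (by linarith)),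
    show 3 - w.re + 1 = 4 - w.re by ring, Real.zero_rpow (by linarith), sub_zero]

theorem differentiableAt_near (hw : w.re < 4) : DifferentiableAt ℂ (P.near · a) w :=
  differentiableAt_integral_cpow_mul measurableSet_Ioc Ioc_subset_Ioi_self
    (P.continuousOn_sub_linear.mono Ioc_subset_Ioi_self) P.norm_sub_linear_le
    (integrableOn_Ioc_rpow (by linarith)) (integrableOn_Ioc_rpow (by linarith))
    (sub_one_lt w.re) (q := (w.re + 4) / 2) (by linarith)

theorem differentiableAt_far (hw : -1 < w.re) : DifferentiableAt ℂ P.far w :=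
  differentiableAt_integral_cpow_mul measurableSet_Ioi (Ioi_subset_Ioi zero_le_one)
    P.continuousOn_sub_limit P.norm_sub_limit_le
    (integrableOn_Ioi_rpow_of_lt (by linarith) one_pos)
    (integrableOn_Ioi_rpow_of_lt (by linarith) one_pos)
    (p := (w.re - 1) / 2) (by linarith) (lt_add_one w.re)

/-- The linear growth constant of a profile. -/
noncomputable def growth : ℝ := |P.c| + P.K + |P.α| + |P.β| + P.L

theorem K_nonneg : 0 ≤ P.K := by
  simpa using (abs_nonneg _).trans (P.abs_sub_linear_le 1 one_pos)

theorem L_nonneg : 0 ≤ P.L := by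
  simpa using (abs_nonneg _).trans (P.abs_sub_limit_le 1 le_rfl)

theorem growth_nonneg : 0 ≤ P.growth := by
  have := P.K_nonneg
  have := P.L_nonneg
  unfold growth
  positivity

theorem abs_g_le {u : ℝ} (hu : 0 < u) : |P.g u| ≤ P.growth * u := by
  have hK := P.K_nonneg
  have hL := P.L_nonneg
  have hc := abs_nonneg P.c
  have hα := abs_nonneg P.α
  have hβ := abs_nonneg P.β
  rcases le_total u 1 with h | h
  · calc |P.g u| ≤ |P.c * u| + |P.g u - P.c * u| := by
          simpa using abs_add_le (P.c * u) (P.g u - P.c * u)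
      _ ≤ |P.c| * u + P.K * u := by
          rw [abs_mul, abs_of_pos hu]
          gcongr
          exact (P.abs_sub_linear_le u hu).trans
            (mul_le_mul_of_nonneg_left (pow_le_of_le_one hu.le h three_ne_zero) hK)
      _ ≤ P.growth * u := by
          rw [← add_mul]
          exact mul_le_mul_of_nonneg_right (by unfold growth; linarith) hu.le
  · calc |P.g u| ≤ |P.α| + |P.β / u| + |P.g u - P.α - P.β / u| := by
          simpa using abs_add_three P.α (P.β / u) (P.g u - P.α - P.β / u)
      _ ≤ |P.α| + |P.β| + P.L := by
          refine add_le_add (add_le_add_right ?_ _)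
            ((P.abs_sub_limit_le u h).trans (div_le_self hL (one_le_pow₀ h)))
          rw [abs_div, abs_of_pos hu]
          exact div_le_self hβ h
      _ ≤ P.growth := by unfold growth; linarith
      _ ≤ P.growth * u := le_mul_of_one_le_right P.growth_nonneg h

theorem cpow_mul_g_eq_far {u : ℝ} (hu : 0 < u) (w : ℂ) :
    (u : ℂ) ^ (-w) * (P.g u : ℂ) =
      (u : ℂ) ^ (-w) * ((P.g u - P.α - P.β / u : ℝ) : ℂ) +
        (P.α * (u : ℂ) ^ (-w) + P.β * (u : ℂ) ^ (-w - 1)) := by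
  have hu0 : (u : ℂ) ≠ 0 := Complex.ofReal_ne_zero.2 hu.ne'
  rw [Complex.cpow_sub _ _ hu0, Complex.cpow_one]
  push_cast
  field_simp
  ring

theorem cpow_mul_g_eq_near {u : ℝ} (hu : 0 < u) (w : ℂ) :
    (u : ℂ) ^ (-w) * (P.g u : ℂ) =
      (u : ℂ) ^ (-w) * ((P.g u - P.c * u : ℝ) : ℂ) + P.c * (u : ℂ) ^ (1 - w) := by
  rw [sub_eq_neg_add 1 w, Complex.cpow_add _ _ (Complex.ofReal_ne_zero.2 hu.ne'),
    Complex.cpow_one]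
  push_cast
  ring

theorem integrableOn_Ioi_one_limit (hw : 1 < w.re) :
    IntegrableOn (fun u : ℝ => P.α * (u : ℂ) ^ (-w) + P.β * (u : ℂ) ^ (-w - 1)) (Ioi 1) :=
  ((integrableOn_Ioi_cpow_of_lt (by simpa using hw) one_pos).const_mul _).add
    ((integrableOn_Ioi_cpow_of_lt (by simp; linarith) one_pos).const_mul _)

theorem integral_Ioi_one_limit (hw : 1 < w.re) :
    ∫ u in Ioi (1 : ℝ), (P.α * (u : ℂ) ^ (-w) + P.β * (u : ℂ) ^ (-w - 1)) =
      P.α / (w - 1) + P.β / w := by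
  rw [integral_add ((integrableOn_Ioi_cpow_of_lt (by simpa using hw) one_pos).const_mul _)
      ((integrableOn_Ioi_cpow_of_lt (by simp; linarith) one_pos).const_mul _),
    integral_const_mul, integral_const_mul,
    integral_Ioi_cpow_of_lt (by simpa using hw) one_pos,
    integral_Ioi_cpow_of_lt (by simp; linarith) one_pos, Complex.ofReal_one, Complex.one_cpow,
    Complex.one_cpow, show -w + 1 = -(w - 1) by ring, show -w - 1 + 1 = -w by ring,
    neg_div_neg_eq, neg_div_neg_eq, mul_one_div, mul_one_div]

theorem integrableOn_Ioi_one (hw : 1 < w.re) :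
    IntegrableOn (fun u : ℝ => (u : ℂ) ^ (-w) * (P.g u : ℂ)) (Ioi 1) :=
  ((P.integrableOn_far (by linarith)).add (P.integrableOn_Ioi_one_limit hw)).congr_fun
    (fun _ hu => (P.cpow_mul_g_eq_far (zero_lt_one.trans hu) w).symm) measurableSet_Ioi

theorem integral_Ioi_one (hw : 1 < w.re) :
    ∫ u in Ioi (1 : ℝ), (u : ℂ) ^ (-w) * (P.g u : ℂ) = P.far w + P.α / (w - 1) + P.β / w := by
  rw [setIntegral_congr_fun measurableSet_Ioi fun u hu =>
      P.cpow_mul_g_eq_far (zero_lt_one.trans hu) w,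
    integral_add (P.integrableOn_far (by linarith)) (P.integrableOn_Ioi_one_limit hw),
    P.integral_Ioi_one_limit hw, far, add_assoc]

theorem integrableOn_Ioi_linear (hw : 2 < w.re) (ha : 0 < a) :
    IntegrableOn (fun u : ℝ => P.c * (u : ℂ) ^ (1 - w)) (Ioi a) :=
  (integrableOn_Ioi_cpow_of_lt (by simp; linarith) ha).const_mul _

theorem integral_Ioi_linear (hw : 2 < w.re) (ha : 0 < a) :
    ∫ u in Ioi a, P.c * (u : ℂ) ^ (1 - w) = P.c / (w - 2) * (a : ℂ) ^ (2 - w) := by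
  rw [integral_const_mul, integral_Ioi_cpow_of_lt (by simp; linarith) ha,
    show 1 - w + 1 = 2 - w by ring, ← neg_sub w 2, neg_div_neg_eq, mul_div_assoc',
    div_mul_eq_mul_div]

theorem integrableOn_Ioi_one_sub_linear (hw : 2 < w.re) :
    IntegrableOn (fun u : ℝ => (u : ℂ) ^ (-w) * ((P.g u - P.c * u : ℝ) : ℂ)) (Ioi 1) :=
  ((P.integrableOn_Ioi_one (by linarith)).sub (P.integrableOn_Ioi_linear hw one_pos)).congr_fun
    (fun _ hu => sub_eq_of_eq_add (P.cpow_mul_g_eq_near (zero_lt_one.trans hu) w))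
    measurableSet_Ioi

theorem integral_Ioi_one_sub_linear (hw : 2 < w.re) :
    ∫ u in Ioi (1 : ℝ), (u : ℂ) ^ (-w) * ((P.g u - P.c * u : ℝ) : ℂ) =
      P.far w + P.α / (w - 1) + P.β / w - P.c / (w - 2) := by
  have h := P.integral_Ioi_linear hw one_pos
  rw [Complex.ofReal_one, Complex.one_cpow, mul_one] at h
  rw [← P.integral_Ioi_one (by linarith), ← h,
    ← integral_sub (P.integrableOn_Ioi_one (by linarith)) (P.integrableOn_Ioi_linear hw one_pos)]
  exact setIntegral_congr_fun measurableSet_Ioi fun u hu =>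
    eq_sub_of_add_eq (P.cpow_mul_g_eq_near (zero_lt_one.trans hu) w).symm

theorem integrableOn_Ioi_zero_sub_linear (hw : 2 < w.re) (hw' : w.re < 4) :
    IntegrableOn (fun u : ℝ => (u : ℂ) ^ (-w) * ((P.g u - P.c * u : ℝ) : ℂ)) (Ioi 0) := by
  rw [← Ioc_union_Ioi_eq_Ioi zero_le_one]
  exact (P.integrableOn_near hw').union (P.integrableOn_Ioi_one_sub_linear hw)

theorem integral_Ioi_zero_sub_linear (hw : 2 < w.re) (hw' : w.re < 4) :
    ∫ u in Ioi (0 : ℝ), (u : ℂ) ^ (-w) * ((P.g u - P.c * u : ℝ) : ℂ) = P.mellin w := by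
  rw [← Ioc_union_Ioi_eq_Ioi zero_le_one, setIntegral_union (Ioc_disjoint_Ioi le_rfl)
    measurableSet_Ioi (P.integrableOn_near hw') (P.integrableOn_Ioi_one_sub_linear hw),
    P.integral_Ioi_one_sub_linear hw, mellin, near]
  ring

theorem integral_Ioi (hw : 2 < w.re) (hw' : w.re < 4) (ha : 0 < a) :
    ∫ u in Ioi a, (u : ℂ) ^ (-w) * (P.g u : ℂ) =
      P.mellin w - P.near w a + P.c / (w - 2) * (a : ℂ) ^ (2 - w) := by
  have hint := P.integrableOn_Ioi_zero_sub_linear hw hw'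
  have hsplit := setIntegral_union (Ioc_disjoint_Ioi (le_refl a)) measurableSet_Ioi
    (P.integrableOn_near hw') (hint.mono_set (Ioi_subset_Ioi ha.le))
  rw [Ioc_union_Ioi_eq_Ioi ha.le, P.integral_Ioi_zero_sub_linear hw hw'] at hsplit
  rw [setIntegral_congr_fun measurableSet_Ioi fun u hu => P.cpow_mul_g_eq_near (ha.trans hu) w,
    integral_add (hint.mono_set (Ioi_subset_Ioi ha.le)) (P.integrableOn_Ioi_linear hw ha),
    P.integral_Ioi_linear hw ha, hsplit, near, add_sub_cancel_left]

end Profile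

/-! ### Kernel integrals and their series -/

/-- Kernels `φ s t` that are entire in `s` and continuous in `t ≥ 1`. -/
structure IsEntireKernel (φ : ℂ → ℝ → ℂ) : Prop where
  differentiable : ∀ t, 1 ≤ t → Differentiable ℂ (φ · t)
  continuousOn : ∀ s, ContinuousOn (φ s) (Ici 1)

/-- Near `s`, the kernel decays in `t` faster than `t⁻²` by a power, uniformly in the parameter;
this is what a linearly growing profile needs. -/
def DecaysAt (φ : ℂ → ℝ → ℂ) (s : ℂ) : Prop :=
  ∃ M p : ℝ, 2 < p ∧ ∀ᶠ z in 𝓝 s, ∀ t, 1 ≤ t → ‖φ z t‖ ≤ M * t ^ (-p)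

namespace Profile

variable (P : Profile) {φ : ℂ → ℝ → ℂ} {M p l a : ℝ} {s : ℂ}

/-- The integral `l ∫ₐ^∞ φ_s(l u) g(u) du`. -/
noncomputable def transform (φ : ℂ → ℝ → ℂ) (l a : ℝ) (s : ℂ) : ℂ :=
  l * ∫ u in Ioi a, φ s (l * u) * (P.g u : ℂ)

theorem norm_kernel_mul_g_le (hφ : ∀ t, 1 ≤ t → ‖φ s t‖ ≤ M * t ^ (-p)) (hl : 0 < l) {u : ℝ}
    (hu : 0 < u) (hlu : 1 ≤ l * u) :
    ‖φ s (l * u) * (P.g u : ℂ)‖ ≤ M * P.growth * l ^ (-p) * u ^ (1 - p) := by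
  rw [norm_mul, Complex.norm_real, Real.norm_eq_abs]
  calc ‖φ s (l * u)‖ * |P.g u| ≤ M * (l * u) ^ (-p) * (P.growth * u) :=
        mul_le_mul (hφ _ hlu) (P.abs_g_le hu) (abs_nonneg _) ((norm_nonneg _).trans (hφ _ hlu))
    _ = M * P.growth * l ^ (-p) * u ^ (1 - p) := by
        rw [Real.mul_rpow hl.le hu.le, sub_eq_neg_add 1 p, Real.rpow_add hu, Real.rpow_one]
        ring

theorem ae_norm_kernel_mul_g_le (hφ : ∀ t, 1 ≤ t → ‖φ s t‖ ≤ M * t ^ (-p)) (hl : 0 < l)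
    (ha : 0 < a) (hla : 1 ≤ l * a) : ∀ᵐ u ∂volume.restrict (Ioi a),
      ‖φ s (l * u) * (P.g u : ℂ)‖ ≤ M * P.growth * l ^ (-p) * u ^ (1 - p) :=
  (ae_restrict_iff' measurableSet_Ioi).2 <| ae_of_all _ fun u (hu : a < u) =>
    P.norm_kernel_mul_g_le hφ hl (ha.trans hu) (hla.trans (by gcongr))

theorem aestronglyMeasurable_kernel_mul_g (hφ : IsEntireKernel φ) (s : ℂ) (hl : 0 < l)
    (ha : 0 < a) (hla : 1 ≤ l * a) :
    AEStronglyMeasurable (fun u : ℝ => φ s (l * u) * (P.g u : ℂ)) (volume.restrict (Ioi a)) := by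
  refine ContinuousOn.aestronglyMeasurable (.mul ?_ ?_) measurableSet_Ioi
  · exact (hφ.continuousOn s).comp (by fun_prop) fun u (hu : a < u) =>
      hla.trans (mul_le_mul_of_nonneg_left hu.le hl.le)
  · exact Complex.continuous_ofReal.comp_continuousOn
      (P.continuousOn_g.mono (Ioi_subset_Ioi ha.le))

theorem integrableOn_Ioi_const_mul_rpow (hp : 2 < p) (ha : 0 < a) (C : ℝ) :
    IntegrableOn (fun u : ℝ => C * u ^ (1 - p)) (Ioi a) :=
  (integrableOn_Ioi_rpow_of_lt (by linarith) ha).const_mul C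

theorem integrableOn_kernel_mul_g (hφ : IsEntireKernel φ) (hs : DecaysAt φ s) (hl : 0 < l)
    (ha : 0 < a) (hla : 1 ≤ l * a) :
    IntegrableOn (fun u : ℝ => φ s (l * u) * (P.g u : ℂ)) (Ioi a) :=
  let ⟨_, _, hp, hbound⟩ := hs
  (integrableOn_Ioi_const_mul_rpow hp ha _).mono'
    (P.aestronglyMeasurable_kernel_mul_g hφ s hl ha hla)
    (P.ae_norm_kernel_mul_g_le hbound.self_of_nhds hl ha hla)

theorem differentiableAt_transform (hφ : IsEntireKernel φ) (hs : DecaysAt φ s) (hl : 0 < l)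
    (ha : 0 < a) (hla : 1 ≤ l * a) : DifferentiableAt ℂ (P.transform φ l a) s := by
  obtain ⟨M, p, hp, hbound⟩ := hs
  refine (differentiableAt_integral_of_dominated
    (U := {z | ∀ t, 1 ≤ t → ‖φ z t‖ ≤ M * t ^ (-p)}) hbound
    (integrableOn_Ioi_const_mul_rpow hp ha (M * P.growth * l ^ (-p)))
    (fun z _ => P.aestronglyMeasurable_kernel_mul_g hφ z hl ha hla) ?_ ?_).const_mul _
  · filter_upwards [ae_restrict_mem measurableSet_Ioi] with u (hu : a < u)
    exact ((hφ.differentiable _ (hla.trans (by gcongr))).mul_const _).differentiableOn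
  · filter_upwards [ae_restrict_mem measurableSet_Ioi] with u (hu : a < u) z hz
    exact P.norm_kernel_mul_g_le hz hl (ha.trans hu) (hla.trans (by gcongr))

theorem norm_transform_le (hφ : ∀ t, 1 ≤ t → ‖φ s t‖ ≤ M * t ^ (-p)) (hp : 2 < p) (hl : 0 < l)
    (ha : 0 < a) (hla : 1 ≤ l * a) :
    ‖P.transform φ l a s‖ ≤ M * P.growth / (p - 2) * (l ^ (1 - p) * a ^ (2 - p)) := by
  have hle := norm_integral_le_of_norm_le (integrableOn_Ioi_const_mul_rpow hp ha _)
    (P.ae_norm_kernel_mul_g_le hφ hl ha hla)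
  rw [integral_const_mul, integral_Ioi_rpow_of_lt (by linarith) ha,
    show 1 - p + 1 = -(p - 2) by ring, neg_div_neg_eq] at hle
  rw [transform, norm_mul, Complex.norm_of_nonneg hl.le]
  refine (mul_le_mul_of_nonneg_left hle hl.le).trans_eq ?_
  rw [sub_eq_neg_add 1 p, Real.rpow_add hl, Real.rpow_one, neg_sub]
  ring

end Profile

/-- The lower end `k^(δ-1) / ω` of the `k`-th integral. -/
noncomputable def cutoff (ω δ : ℝ) (k : ℕ) : ℝ := (k : ℝ) ^ (δ - 1) / ω

theorem ofReal_cpow_eq_exp {x : ℝ} (hx : 0 < x) (z : ℂ) :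
    (x : ℂ) ^ z = Complex.exp (Real.log x * z) := by
  rw [Complex.cpow_def_of_ne_zero (Complex.ofReal_ne_zero.2 hx.ne'), Complex.ofReal_log hx.le]

section Cutoff

variable {ω δ : ℝ} {k : ℕ}

theorem cutoff_pos (hω : 0 < ω) (hk : 0 < k) : 0 < cutoff ω δ k := by
  have : (0 : ℝ) < k := Nat.cast_pos.2 hk
  unfold cutoff
  positivity

theorem mul_cutoff (hω : 0 < ω) (hk : 0 < k) : k * ω * cutoff ω δ k = (k : ℝ) ^ δ := by
  have : (k : ℝ) ≠ 0 := Nat.cast_ne_zero.2 hk.ne'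
  rw [cutoff, Real.rpow_sub_one this]
  field_simp

theorem one_le_mul_cutoff (hω : 0 < ω) (hδ : 0 < δ) (hk : 0 < k) :
    1 ≤ k * ω * cutoff ω δ k := by
  rw [mul_cutoff hω hk]
  exact Real.one_le_rpow (Nat.one_le_cast.2 hk) hδ.le

theorem cpow_mul_cutoff_cpow (hω : 0 < ω) (hk : 0 < k) (q m : ℂ) :
    ((k * ω : ℝ) : ℂ) ^ (1 - q) * (cutoff ω δ k : ℂ) ^ (m - q) =
      (k : ℂ) ^ (1 - m + δ * (m - q)) * (ω : ℂ) ^ (1 - m) := by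
  have hk0 : (0 : ℝ) < k := Nat.cast_pos.2 hk
  rw [← Complex.ofReal_natCast, ofReal_cpow_eq_exp (by positivity),
    ofReal_cpow_eq_exp (cutoff_pos hω hk), ofReal_cpow_eq_exp hk0, ofReal_cpow_eq_exp hω,
    ← Complex.exp_add, ← Complex.exp_add, cutoff, Real.log_mul hk0.ne' hω.ne',
    Real.log_div (by positivity) hω.ne', Real.log_rpow hk0]
  push_cast
  ring_nf

theorem rpow_mul_cutoff_rpow (hω : 0 < ω) (hk : 0 < k) (q m : ℝ) :
    (k * ω) ^ (1 - q) * cutoff ω δ k ^ (m - q) =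
      (k : ℝ) ^ (1 - m + δ * (m - q)) * ω ^ (1 - m) := by
  have h := cpow_mul_cutoff_cpow (δ := δ) hω hk q m
  rw [← Complex.ofReal_inj, Complex.ofReal_mul, Complex.ofReal_mul,
    Complex.ofReal_cpow (by positivity), Complex.ofReal_cpow (cutoff_pos hω hk).le,
    Complex.ofReal_cpow (Nat.cast_nonneg k), Complex.ofReal_cpow hω.le]
  exact_mod_cast h

theorem summable_nat_add_one_rpow {r : ℝ} (hr : r < -1) :
    Summable fun k : ℕ => ((k + 1 : ℕ) : ℝ) ^ r :=
  (summable_nat_add_iff 1).2 (Real.summable_nat_rpow.2 hr)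

end Cutoff

namespace Profile

variable (P : Profile) {φ : ℂ → ℝ → ℂ} {ω δ : ℝ} {s : ℂ}

/-- The `k`-th transform of the series: scale `k ω`, lower end `k^(δ-1) / ω`. -/
noncomputable def term (ω δ : ℝ) (φ : ℂ → ℝ → ℂ) (k : ℕ) : ℂ → ℂ :=
  P.transform φ (k * ω) (cutoff ω δ k)

theorem differentiableAt_term (hφ : IsEntireKernel φ) (hs : DecaysAt φ s) (hω : 0 < ω)
    (hδ : 0 < δ) {k : ℕ} (hk : 0 < k) : DifferentiableAt ℂ (P.term ω δ φ k) s :=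
  P.differentiableAt_transform hφ hs (mul_pos (Nat.cast_pos.2 hk) hω) (cutoff_pos hω hk)
    (one_le_mul_cutoff hω hδ hk)

theorem normallySummableAt_term (hs : DecaysAt φ s) (hω : 0 < ω) (hδ : 0 < δ) :
    NormallySummableAt (fun k => P.term ω δ φ (k + 1)) s := by
  obtain ⟨M, p, hp, hbound⟩ := hs
  have hexp : 1 - 2 + δ * (2 - p) < -1 := by nlinarith
  refine ⟨_, ((summable_nat_add_one_rpow hexp).mul_right (ω ^ (1 - 2 : ℝ))).mul_left
    (M * P.growth / (p - 2)), hbound.mono fun z hz k => ?_⟩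
  rw [← rpow_mul_cutoff_rpow hω k.succ_pos]
  exact P.norm_transform_le hz hp (mul_pos (Nat.cast_pos.2 k.succ_pos) hω)
    (cutoff_pos hω k.succ_pos) (one_le_mul_cutoff hω hδ k.succ_pos)

end Profile

/-! ### The kernel `(t² - 1/4)⁻ˢ` and its expansion for large `t` -/

/-- The kernel `t⁻²ˢ`. -/
noncomputable def powerKernel (s : ℂ) (t : ℝ) : ℂ := (t : ℂ) ^ (-(2 * s))

/-- The kernel `(t² - 1/4)⁻ˢ`. -/
noncomputable def shiftedKernel (s : ℂ) (t : ℝ) : ℂ := ((t ^ 2 - 1 / 4 : ℝ) : ℂ) ^ (-s)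

/-- What is left of `(t² - 1/4)⁻ˢ` after the first two terms `t⁻²ˢ + (s/4) t⁻²ˢ⁻²` of its
expansion for large `t`. -/
noncomputable def remainderKernel (s : ℂ) (t : ℝ) : ℂ :=
  shiftedKernel s t - powerKernel s t - s / 4 * powerKernel (s + 1) t

theorem sq_sub_quarter_pos {t : ℝ} (ht : 1 ≤ t) : 0 < t ^ 2 - 1 / 4 := by nlinarith

theorem isEntireKernel_powerKernel : IsEntireKernel powerKernel where
  differentiable t ht s := by
    have : (t : ℂ) ≠ 0 := Complex.ofReal_ne_zero.2 (by linarith)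
    exact DifferentiableAt.const_cpow (by fun_prop) (.inl this)
  continuousOn s t ht := (Complex.continuousAt_ofReal_cpow_const _ _
    (.inr (zero_lt_one.trans_le ht).ne')).continuousWithinAt

theorem isEntireKernel_shiftedKernel : IsEntireKernel shiftedKernel where
  differentiable t ht s :=
    .const_cpow (by fun_prop) (.inl (Complex.ofReal_ne_zero.2 (sq_sub_quarter_pos ht).ne'))
  continuousOn s t ht := ContinuousAt.continuousWithinAt <|
    ContinuousAt.comp (f := fun t : ℝ => t ^ 2 - 1 / 4) (g := fun x : ℝ => (x : ℂ) ^ (-s))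
      (Complex.continuousAt_ofReal_cpow_const _ _ (.inr (sq_sub_quarter_pos ht).ne'))
      (by fun_prop)

theorem isEntireKernel_remainderKernel : IsEntireKernel remainderKernel where
  differentiable t ht := by
    have hs := isEntireKernel_shiftedKernel.differentiable t ht
    have hp := isEntireKernel_powerKernel.differentiable t ht
    have hp1 : Differentiable ℂ fun s => powerKernel (s + 1) t := hp.comp (by fun_prop)
    unfold remainderKernel
    fun_prop
  continuousOn s :=
    ((isEntireKernel_shiftedKernel.continuousOn s).sub
      (isEntireKernel_powerKernel.continuousOn s)).sub
      (continuousOn_const.mul (isEntireKernel_powerKernel.continuousOn (s + 1)))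

theorem norm_powerKernel (s : ℂ) {t : ℝ} (ht : 0 < t) : ‖powerKernel s t‖ = t ^ (-(2 * s.re)) := by
  rw [powerKernel, Complex.norm_cpow_eq_rpow_re_of_pos ht]
  simp

theorem eventually_lt_re {r : ℝ} {s : ℂ} (h : r < s.re) : ∀ᶠ z in 𝓝 s, r < z.re :=
  Complex.continuous_re.continuousAt.eventually_const_lt h

theorem eventually_re_lt {r : ℝ} {s : ℂ} (h : s.re < r) : ∀ᶠ z in 𝓝 s, z.re < r :=
  Complex.continuous_re.continuousAt.eventually_lt_const h

theorem decaysAt_powerKernel {s : ℂ} (hs : 1 < s.re) : DecaysAt powerKernel s := by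
  refine ⟨1, s.re + 1, by linarith, ?_⟩
  filter_upwards [eventually_lt_re (show (s.re + 1) / 2 < s.re by linarith)] with z hz t ht
  rw [norm_powerKernel _ (by linarith), one_mul]
  exact Real.rpow_le_rpow_of_exponent_le ht (by linarith)

theorem norm_shiftedKernel_le {z : ℂ} (hz : 0 ≤ z.re) {t : ℝ} (ht : 1 ≤ t) :
    ‖shiftedKernel z t‖ ≤ (3 / 4 : ℝ) ^ (-z.re) * t ^ (-(2 * z.re)) := by
  rw [shiftedKernel, Complex.norm_cpow_eq_rpow_re_of_pos (sq_sub_quarter_pos ht), Complex.neg_re]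
  calc (t ^ 2 - 1 / 4) ^ (-z.re) ≤ (3 / 4 * t ^ 2) ^ (-z.re) :=
        Real.rpow_le_rpow_of_nonpos (by positivity) (by nlinarith) (by linarith)
    _ = (3 / 4 : ℝ) ^ (-z.re) * t ^ (-(2 * z.re)) := by
        rw [Real.mul_rpow (by norm_num) (by positivity), ← Real.rpow_natCast,
          ← Real.rpow_mul (by linarith), Nat.cast_ofNat, mul_neg]

theorem decaysAt_shiftedKernel {s : ℂ} (hs : 1 < s.re) : DecaysAt shiftedKernel s := by
  refine ⟨(3 / 4 : ℝ) ^ (-(s.re + 1)), s.re + 1, by linarith, ?_⟩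
  filter_upwards [eventually_lt_re (show (s.re + 1) / 2 < s.re by linarith),
    eventually_re_lt (lt_add_one s.re)] with z hz hz' t ht
  refine (norm_shiftedKernel_le (by linarith) ht).trans ?_
  gcongr ?_ * ?_
  · exact Real.rpow_le_rpow_of_exponent_ge (by norm_num) (by norm_num) (by linarith)
  · exact Real.rpow_le_rpow_of_exponent_le ht (by linarith)

theorem neg_log_one_sub_le {x : ℝ} (hx : x ≤ 1 / 2) :
    -Real.log (1 - x) ≤ x + 2 * x ^ 2 := by
  have hinv : (1 - x)⁻¹ ≤ 1 + x + 2 * x ^ 2 := by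
    rw [inv_le_iff_one_le_mul₀ (by linarith)]
    nlinarith [mul_nonneg (sq_nonneg x) (sub_nonneg.2 hx)]
  linarith [Real.one_sub_inv_le_log_of_pos (by linarith : 0 < 1 - x)]

theorem norm_exp_sub_one_sub_le (z : ℂ) :
    ‖Complex.exp z - 1 - z‖ ≤ ‖z‖ ^ 2 * Real.exp ‖z‖ := by
  simpa [Finset.sum_range_succ, sub_sub] using Complex.norm_exp_sub_sum_le_norm_mul_exp z 2

theorem norm_one_sub_cpow_neg_sub_le {z : ℂ} {x m : ℝ} (hm : ‖z‖ ≤ m) (hx0 : 0 ≤ x)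
    (hx : x ≤ 1 / 2) :
    ‖((1 - x : ℝ) : ℂ) ^ (-z) - 1 - z * x‖ ≤ (4 * m ^ 2 * Real.exp m + 2 * m) * x ^ 2 := by
  have hm0 : 0 ≤ m := (norm_nonneg z).trans hm
  set y := -Real.log (1 - x) with hy
  have hxy : x ≤ y := by linarith [Real.log_le_sub_one_of_pos (by linarith : 0 < 1 - x)]
  have hyx : y ≤ x + 2 * x ^ 2 := neg_log_one_sub_le hx
  have hzy : ‖z * (y : ℂ)‖ ≤ m * (2 * x) := by
    rw [norm_mul, Complex.norm_real, Real.norm_of_nonneg (hx0.trans hxy)]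
    exact mul_le_mul hm (by nlinarith) (hx0.trans hxy) hm0
  have hsplit : ((1 - x : ℝ) : ℂ) ^ (-z) - 1 - z * x =
      (Complex.exp (z * y) - 1 - z * y) + z * ((y - x : ℝ) : ℂ) := by
    rw [ofReal_cpow_eq_exp (by linarith), show Real.log (1 - x) = -y by rw [hy, neg_neg]]
    push_cast
    ring_nf
  rw [hsplit]
  calc ‖(Complex.exp (z * y) - 1 - z * y) + z * ((y - x : ℝ) : ℂ)‖
      ≤ ‖z * y‖ ^ 2 * Real.exp ‖z * y‖ + ‖z‖ * (y - x) := by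
        refine (norm_add_le _ _).trans (add_le_add (norm_exp_sub_one_sub_le _) ?_)
        rw [norm_mul, Complex.norm_real, Real.norm_of_nonneg (sub_nonneg.2 hxy)]
    _ ≤ (m * (2 * x)) ^ 2 * Real.exp m + m * (2 * x ^ 2) := by
        gcongr
        · exact hzy.trans (by nlinarith)
        · linarith
    _ = (4 * m ^ 2 * Real.exp m + 2 * m) * x ^ 2 := by ring

theorem shiftedKernel_eq (s : ℂ) {t : ℝ} (ht : 1 ≤ t) :
    shiftedKernel s t = powerKernel s t * ((1 - 1 / (4 * t ^ 2) : ℝ) : ℂ) ^ (-s) := by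
  have ht0 : 0 < t := by linarith
  have hx : 0 < 1 - 1 / (4 * t ^ 2) := by
    rw [sub_pos, div_lt_one (by positivity)]
    nlinarith
  have hfactor : t ^ 2 - 1 / 4 = t ^ 2 * (1 - 1 / (4 * t ^ 2)) := by field_simp
  rw [shiftedKernel, powerKernel, ofReal_cpow_eq_exp (sq_sub_quarter_pos ht),
    ofReal_cpow_eq_exp ht0, ofReal_cpow_eq_exp hx, ← Complex.exp_add, hfactor,
    Real.log_mul (by positivity) hx.ne', Real.log_pow]
  push_cast
  ring_nf

theorem powerKernel_add_one (s : ℂ) {t : ℝ} (ht : 0 < t) :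
    powerKernel (s + 1) t = powerKernel s t * ((1 / t ^ 2 : ℝ) : ℂ) := by
  rw [powerKernel, powerKernel, show -(2 * (s + 1)) = -(2 * s) - (2 : ℕ) by push_cast; ring,
    Complex.cpow_sub _ _ (Complex.ofReal_ne_zero.2 ht.ne'), Complex.cpow_natCast]
  push_cast
  ring

theorem remainderKernel_eq (s : ℂ) {t : ℝ} (ht : 1 ≤ t) :
    remainderKernel s t = powerKernel s t *
      (((1 - 1 / (4 * t ^ 2) : ℝ) : ℂ) ^ (-s) - 1 - s * (1 / (4 * t ^ 2) : ℝ)) := by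
  rw [remainderKernel, shiftedKernel_eq s ht, powerKernel_add_one s (by linarith)]
  push_cast
  ring

theorem norm_remainderKernel_le {z : ℂ} {m t : ℝ} (hm : ‖z‖ ≤ m) (ht : 1 ≤ t) :
    ‖remainderKernel z t‖ ≤
      (4 * m ^ 2 * Real.exp m + 2 * m) * t ^ (-(2 * z.re + 4)) := by
  have hm0 : 0 ≤ m := (norm_nonneg z).trans hm
  have ht0 : 0 < t := by linarith
  have hx : 1 / (4 * t ^ 2) ≤ 1 / 2 := by
    rw [div_le_div_iff₀ (by positivity) (by norm_num)]
    nlinarith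
  rw [remainderKernel_eq z ht, norm_mul, norm_powerKernel _ ht0]
  calc t ^ (-(2 * z.re)) *
        ‖((1 - 1 / (4 * t ^ 2) : ℝ) : ℂ) ^ (-z) - 1 - z * (1 / (4 * t ^ 2) : ℝ)‖
      ≤ t ^ (-(2 * z.re)) *
        ((4 * m ^ 2 * Real.exp m + 2 * m) * (1 / (4 * t ^ 2)) ^ 2) := by
        gcongr
        exact norm_one_sub_cpow_neg_sub_le hm (by positivity) hx
    _ ≤ t ^ (-(2 * z.re)) * ((4 * m ^ 2 * Real.exp m + 2 * m) * (1 / t ^ 2) ^ 2) := by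
        gcongr
        nlinarith
    _ = (4 * m ^ 2 * Real.exp m + 2 * m) * t ^ (-(2 * z.re + 4)) := by
        have hpow : (1 / t ^ 2) ^ 2 = t ^ (-4 : ℝ) := by
          rw [Real.rpow_neg ht0.le, div_pow, one_pow, ← pow_mul, one_div]
          norm_cast
        rw [hpow, neg_add, Real.rpow_add ht0]
        ring

theorem decaysAt_remainderKernel {s : ℂ} (hs : -1 < s.re) : DecaysAt remainderKernel s := by
  refine ⟨4 * (‖s‖ + 1) ^ 2 * Real.exp (‖s‖ + 1) + 2 * (‖s‖ + 1), s.re + 3, by linarith, ?_⟩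
  filter_upwards [eventually_lt_re (show (s.re - 1) / 2 < s.re by linarith),
    continuous_norm.continuousAt.eventually_lt_const (lt_add_one ‖s‖)] with z hz hnorm t ht
  refine (norm_remainderKernel_le hnorm.le ht).trans ?_
  exact mul_le_mul_of_nonneg_left (Real.rpow_le_rpow_of_exponent_le ht (by linarith))
    (by positivity)

theorem remainderKernel_zero (t : ℝ) : remainderKernel 0 t = 0 := by
  simp [remainderKernel, shiftedKernel, powerKernel]

theorem Profile.term_shiftedKernel (P : Profile) {ω δ : ℝ} (hω : 0 < ω) (hδ : 0 < δ) {k : ℕ}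
    (hk : 0 < k) {s : ℂ} (hs : 1 < s.re) :
    P.term ω δ shiftedKernel k s = P.term ω δ powerKernel k s +
      s / 4 * P.term ω δ powerKernel k (s + 1) + P.term ω δ remainderKernel k s := by
  have hl : 0 < k * ω := mul_pos (Nat.cast_pos.2 hk) hω
  have hc := cutoff_pos (δ := δ) hω hk
  have hlc := one_le_mul_cutoff hω hδ hk
  have hint := P.integrableOn_kernel_mul_g isEntireKernel_powerKernel
    (decaysAt_powerKernel hs) hl hc hlc
  have hint1 := P.integrableOn_kernel_mul_g isEntireKernel_powerKernel
    (decaysAt_powerKernel (s := s + 1) (by simp; linarith)) hl hc hlc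
  have hintR := P.integrableOn_kernel_mul_g isEntireKernel_remainderKernel
    (decaysAt_remainderKernel (by linarith)) hl hc hlc
  have hsplit : ∀ u : ℝ, shiftedKernel s (k * ω * u) * (P.g u : ℂ) =
      powerKernel s (k * ω * u) * P.g u +
        (s / 4 * (powerKernel (s + 1) (k * ω * u) * P.g u) +
          remainderKernel s (k * ω * u) * P.g u) := fun u => by
    unfold remainderKernel
    ring
  simp only [term, transform, hsplit]
  rw [integral_add hint (by exact (hint1.const_mul _).add hintR),
    integral_add (hint1.const_mul _) hintR, integral_const_mul]
  ring

/-! ### The series of the kernel `t⁻²ˢ` in closed form -/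

theorem hasSum_nat_add_one_cpow {z : ℂ} (hz : 1 < z.re) :
    HasSum (fun k : ℕ => ((k + 1 : ℕ) : ℂ) ^ (-z)) (riemannZeta z) := by
  have hsum := (summable_nat_add_iff 1).2 (Complex.summable_one_div_nat_cpow.2 hz)
  rw [zeta_eq_tsum_one_div_nat_add_one_cpow hz]
  simp only [one_div, ← Complex.cpow_neg] at hsum ⊢
  exact_mod_cast hsum.hasSum

theorem meromorphicAt_riemannZeta (z : ℂ) : MeromorphicAt riemannZeta z := by
  have hfactor : MeromorphicAt (fun s => (s - 1)⁻¹ * riemannZeta₁ s) z :=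
    (MeromorphicAt.inv (by fun_prop)).mul (differentiable_riemannZeta₁.analyticAt z).meromorphicAt
  refine hfactor.congr ?_
  have hne : ∀ᶠ s in 𝓝[≠] z, s ≠ 1 := by
    rcases eq_or_ne z 1 with rfl | hz
    · exact self_mem_nhdsWithin
    · exact nhdsWithin_le_nhds (isOpen_ne.mem_nhds hz)
  filter_upwards [hne] with s hs using (riemannZeta_eq_inv_sub_mul hs).symm

namespace Profile

variable (P : Profile) {ω δ : ℝ} {s : ℂ}

/-- What cutting the `k`-th integral off at `k^(δ-1) / ω` takes away from the full Mellin
transform. -/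
noncomputable def nearTerm (ω δ : ℝ) (k : ℕ) (s : ℂ) : ℂ :=
  ((k * ω : ℝ) : ℂ) ^ (1 - 2 * s) * P.near (2 * s) (cutoff ω δ k)

/-- The series of the cut-off corrections, convergent for `-1/2 < Re s < 2` if `δ ≤ 2/5`. -/
noncomputable def nearSeries (ω δ : ℝ) (s : ℂ) : ℂ := ∑' k : ℕ, P.nearTerm ω δ (k + 1) s

theorem norm_nearTerm_le (hω : 0 < ω) {k : ℕ} (hk : 0 < k) (hs : s.re < 2) :
    ‖P.nearTerm ω δ k s‖ ≤ P.K / (4 - 2 * s.re) *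
      ((k : ℝ) ^ (1 - 4 + δ * (4 - 2 * s.re)) * ω ^ (1 - 4 : ℝ)) := by
  have hl : 0 < k * ω := mul_pos (Nat.cast_pos.2 hk) hω
  have hre : (2 * s).re = 2 * s.re := by simp
  have hnear := P.norm_near_le (w := 2 * s) (by linarith) (cutoff_pos (δ := δ) hω hk).le
  rw [hre] at hnear
  rw [← rpow_mul_cutoff_rpow hω hk, nearTerm, norm_mul,
    Complex.norm_cpow_eq_rpow_re_of_pos hl, Complex.sub_re, Complex.one_re, hre]
  refine (mul_le_mul_of_nonneg_left hnear (by positivity)).trans_eq ?_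
  ring

theorem differentiableAt_nearTerm (hω : 0 < ω) {k : ℕ} (hk : 0 < k) (hs : s.re < 2) :
    DifferentiableAt ℂ (P.nearTerm ω δ k) s := by
  have hl : ((k * ω : ℝ) : ℂ) ≠ 0 :=
    Complex.ofReal_ne_zero.2 (mul_pos (Nat.cast_pos.2 hk) hω).ne'
  have hnear : DifferentiableAt ℂ (fun z => P.near (2 * z) (cutoff ω δ k)) s :=
    (P.differentiableAt_near (by simp; linarith)).comp s (by fun_prop)
  exact (DifferentiableAt.const_cpow (by fun_prop) (.inl hl)).mul hnear

theorem normallySummableAt_nearTerm (hω : 0 < ω) (hδ : 0 < δ) (hδ' : δ ≤ 2 / 5)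
    (hs : -(1 / 2) < s.re) (hs' : s.re < 2) :
    NormallySummableAt (fun k => P.nearTerm ω δ (k + 1)) s := by
  have hexp : 1 - 4 + δ * (9 / 2 - s.re) < -1 := by nlinarith
  refine ⟨_, ((summable_nat_add_one_rpow hexp).mul_right (ω ^ (1 - 4 : ℝ))).mul_left
    (P.K / (2 - s.re)), ?_⟩
  filter_upwards [eventually_lt_re (show (s.re - 1 / 2) / 2 < s.re by linarith),
    eventually_re_lt (show s.re < (s.re + 2) / 2 by linarith)] with z hz hz' k
  refine (P.norm_nearTerm_le hω k.succ_pos (by linarith)).trans ?_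
  have hK := P.K_nonneg
  have hs2 : 0 < 2 - s.re := by linarith
  gcongr ?_ * (?_ * _)
  · exact div_le_div_of_nonneg_left hK hs2 (by linarith)
  · exact Real.rpow_le_rpow_of_exponent_le (Nat.one_le_cast.2 k.succ_pos) (by nlinarith)

theorem analyticAt_nearSeries (hω : 0 < ω) (hδ : 0 < δ) (hδ' : δ ≤ 2 / 5)
    (hs : -(1 / 2) < s.re) (hs' : s.re < 2) : AnalyticAt ℂ (P.nearSeries ω δ) s :=
  (P.normallySummableAt_nearTerm hω hδ hδ' hs hs').analyticAt_tsum <|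
    (eventually_re_lt hs').mono fun _ hz k => P.differentiableAt_nearTerm hω k.succ_pos hz

theorem norm_nearSeries_zero_le (hω : 0 < ω) (hδ : δ ≤ 2 / 5) :
    ‖P.nearSeries ω δ 0‖ ≤
      P.K / 4 * ∑' k : ℕ, ((k + 1 : ℕ) : ℝ) ^ (1 - 4 + δ * 4) * ω ^ (1 - 4 : ℝ) := by
  rw [← tsum_mul_left]
  refine tsum_of_norm_bounded (Summable.hasSum ?_) fun k => ?_
  · exact ((summable_nat_add_one_rpow (by linarith)).mul_right _).mul_left _
  · simpa using P.norm_nearTerm_le (s := 0) (δ := δ) hω k.succ_pos (by simp)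

/-- The closed form of the series of transforms of `t⁻²ˢ`. -/
noncomputable def closedForm (ω δ : ℝ) (s : ℂ) : ℂ :=
  (ω : ℂ) ^ (1 - 2 * s) * riemannZeta (2 * s - 1) * P.mellin (2 * s) - P.nearSeries ω δ s +
    P.c / (2 * s - 2) * (ω : ℂ)⁻¹ * riemannZeta (1 - δ * (2 - 2 * s))

theorem transform_powerKernel {l a : ℝ} (hl : 0 < l) (ha : 0 < a) (hs : 1 < s.re)
    (hs' : s.re < 2) : P.transform powerKernel l a s = (l : ℂ) ^ (1 - 2 * s) *
      (P.mellin (2 * s) - P.near (2 * s) a + P.c / (2 * s - 2) * (a : ℂ) ^ (2 - 2 * s)) := by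
  have hscale : ∀ u ∈ Ioi a, powerKernel s (l * u) * (P.g u : ℂ) =
      (l : ℂ) ^ (-(2 * s)) * ((u : ℂ) ^ (-(2 * s)) * P.g u) := fun u hu => by
    rw [powerKernel, Complex.ofReal_mul,
      Complex.mul_cpow_ofReal_nonneg hl.le (ha.trans hu).le, mul_assoc]
  rw [transform, setIntegral_congr_fun measurableSet_Ioi hscale, integral_const_mul,
    P.integral_Ioi (by simp; linarith) (by simp; linarith) ha, ← mul_assoc, sub_eq_add_neg 1,
    Complex.cpow_add _ _ (Complex.ofReal_ne_zero.2 hl.ne'), Complex.cpow_one]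

theorem term_powerKernel (hω : 0 < ω) {k : ℕ} (hk : 0 < k) (hs : 1 < s.re) (hs' : s.re < 2) :
    P.term ω δ powerKernel k s =
      (ω : ℂ) ^ (1 - 2 * s) * P.mellin (2 * s) * (k : ℂ) ^ (-(2 * s - 1)) -
        P.nearTerm ω δ k s +
          P.c / (2 * s - 2) * (ω : ℂ)⁻¹ * (k : ℂ) ^ (-(1 - δ * (2 - 2 * s))) := by
  have hscale : ((k * ω : ℝ) : ℂ) ^ (1 - 2 * s) =
      (k : ℂ) ^ (-(2 * s - 1)) * (ω : ℂ) ^ (1 - 2 * s) := by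
    rw [Complex.ofReal_mul, Complex.mul_cpow_ofReal_nonneg (Nat.cast_nonneg k) hω.le, neg_sub,
      Complex.ofReal_natCast]
  have hcut := cpow_mul_cutoff_cpow (δ := δ) hω hk (2 * s) 2
  rw [show (1 : ℂ) - 2 + δ * (2 - 2 * s) = -(1 - δ * (2 - 2 * s)) by ring,
    show (1 - 2 : ℂ) = -1 by norm_num, Complex.cpow_neg_one] at hcut
  rw [term, P.transform_powerKernel (mul_pos (Nat.cast_pos.2 hk) hω) (cutoff_pos hω hk) hs hs',
    mul_add, mul_sub, mul_left_comm, hcut, ← nearTerm, hscale]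
  ring

/-- The series of transforms of `t⁻²ˢ`, convergent for `Re s > 1`. -/
noncomputable def powerSeries (ω δ : ℝ) (s : ℂ) : ℂ := ∑' k : ℕ, P.term ω δ powerKernel (k + 1) s

theorem powerSeries_eq_closedForm (hω : 0 < ω) (hδ : 0 < δ) (hδ' : δ ≤ 2 / 5)
    (hs : 1 < s.re) (hs' : s.re < 2) : P.powerSeries ω δ s = P.closedForm ω δ s := by
  have hmellin := (hasSum_nat_add_one_cpow (z := 2 * s - 1) (by simp; linarith)).mul_left
    ((ω : ℂ) ^ (1 - 2 * s) * P.mellin (2 * s))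
  have hnear := (P.normallySummableAt_nearTerm hω hδ hδ' (by linarith) hs').summable_norm.of_norm
  have hlinear := (hasSum_nat_add_one_cpow (z := 1 - δ * (2 - 2 * s)) (by simp; nlinarith)).mul_left
    (P.c / (2 * s - 2) * (ω : ℂ)⁻¹)
  rw [powerSeries, tsum_congr fun k => P.term_powerKernel hω k.succ_pos hs hs',
    ((hmellin.sub hnear.hasSum).add hlinear).tsum_eq, closedForm, nearSeries]
  ring

theorem analyticAt_powerSeries (hω : 0 < ω) (hδ : 0 < δ) (hs : 1 < s.re) :
    AnalyticAt ℂ (P.powerSeries ω δ) s :=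
  (P.normallySummableAt_term (decaysAt_powerKernel hs) hω hδ).analyticAt_tsum <|
    (eventually_lt_re hs).mono fun _ hz k =>
      P.differentiableAt_term isEntireKernel_powerKernel (decaysAt_powerKernel hz) hω hδ k.succ_pos

theorem analyticAt_near_two_mul {a : ℝ} (hs : s.re < 2) :
    AnalyticAt ℂ (fun z => P.near (2 * z) a) s :=
  Complex.analyticAt_iff_eventually_differentiableAt.2 <| (eventually_re_lt hs).mono fun z hz =>
    (P.differentiableAt_near (by simp; linarith)).comp z (by fun_prop)

theorem analyticAt_far_two_mul (hs : -(1 / 2) < s.re) : AnalyticAt ℂ (fun z => P.far (2 * z)) s :=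
  Complex.analyticAt_iff_eventually_differentiableAt.2 <| (eventually_lt_re hs).mono fun z hz =>
    (P.differentiableAt_far (by simp; linarith)).comp z (by fun_prop)

theorem meromorphicAt_closedForm (hω : 0 < ω) (hδ : 0 < δ) (hδ' : δ ≤ 2 / 5)
    (hs : -(1 / 2) < s.re) (hs' : s.re < 2) : MeromorphicAt (P.closedForm ω δ) s := by
  have hpow : MeromorphicAt (fun z : ℂ => (ω : ℂ) ^ (1 - 2 * z)) s :=
    (analyticAt_const.cpow (by fun_prop) (by simp [hω])).meromorphicAt
  have hzeta : MeromorphicAt (fun z => riemannZeta (2 * z - 1)) s :=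
    (meromorphicAt_riemannZeta _).comp_analyticAt (g := fun z : ℂ => 2 * z - 1) (by fun_prop)
  have hzetaδ : MeromorphicAt (fun z => riemannZeta (1 - δ * (2 - 2 * z))) s :=
    (meromorphicAt_riemannZeta _).comp_analyticAt (g := fun z : ℂ => 1 - δ * (2 - 2 * z))
      (by fun_prop)
  have hnear := (P.analyticAt_nearSeries hω hδ hδ' hs hs').meromorphicAt
  have hnear1 := (P.analyticAt_near_two_mul (a := 1) hs').meromorphicAt
  have hfar := (P.analyticAt_far_two_mul hs).meromorphicAt
  unfold closedForm mellin
  fun_prop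

open Classical in
/-- The continuation of the series of transforms of `t⁻²ˢ` to `Re s > -1/2`. -/
noncomputable def continuation (ω δ : ℝ) : ℂ → ℂ :=
  {s : ℂ | s.re < 2}.piecewise (P.closedForm ω δ) (P.powerSeries ω δ)

theorem continuation_eq_closedForm (hs : s.re < 2) :
    P.continuation ω δ s = P.closedForm ω δ s :=
  piecewise_eq_of_mem _ _ _ hs

theorem continuation_eq_powerSeries (hω : 0 < ω) (hδ : 0 < δ) (hδ' : δ ≤ 2 / 5)
    (hs : 1 < s.re) : P.continuation ω δ s = P.powerSeries ω δ s := by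
  rcases lt_or_ge s.re 2 with hs' | hs'
  · rw [continuation_eq_closedForm P hs', P.powerSeries_eq_closedForm hω hδ hδ' hs hs']
  · exact piecewise_eq_of_notMem _ _ _ (not_lt.2 hs')

theorem meromorphicAt_continuation (hω : 0 < ω) (hδ : 0 < δ) (hδ' : δ ≤ 2 / 5)
    (hs : -(1 / 2) < s.re) : MeromorphicAt (P.continuation ω δ) s := by
  rcases lt_or_ge s.re 2 with hs' | hs'
  · refine (P.meromorphicAt_closedForm hω hδ hδ' hs hs').congr (nhdsWithin_le_nhds ?_)
    filter_upwards [eventually_re_lt hs'] with z hz using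
      (P.continuation_eq_closedForm hz).symm
  · have hs1 : 1 < s.re := by linarith
    refine (P.analyticAt_powerSeries hω hδ hs1).meromorphicAt.congr (nhdsWithin_le_nhds ?_)
    filter_upwards [eventually_lt_re hs1] with z hz using
      (P.continuation_eq_powerSeries hω hδ hδ' hz).symm

end Profile

/-! ### Behaviour at `s = 0` -/

theorem hasDerivAt_id_mul_zero {y : ℂ → ℂ} (hy : ContinuousAt y 0) :
    HasDerivAt (fun s => s * y s) (y 0) 0 := by
  rw [hasDerivAt_iff_tendsto_slope]
  refine (hy.tendsto.mono_left nhdsWithin_le_nhds).congr' ?_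
  filter_upwards [self_mem_nhdsWithin] with s (hs : s ≠ 0)
  simp [slope_def_field, hs]

theorem hasDerivAt_mul_const_add_id_mul_zero {x y : ℂ → ℂ} (hx : DifferentiableAt ℂ x 0)
    (hy : ContinuousAt y 0) (b : ℂ) :
    HasDerivAt (fun s => x s * (b + s * y s)) (deriv x 0 * b + x 0 * y 0) 0 := by
  simpa using hx.hasDerivAt.fun_mul ((hasDerivAt_id_mul_zero hy).const_add b)

/-- The quotient `2 sin(π s) / (π s)`, with its limit `2` at `s = 0`. -/
noncomputable def sineQuotient : ℂ → ℂ :=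
  dslope (fun s => 2 * Complex.sin (Real.pi * s) / Real.pi) 0

theorem sineQuotient_mul_id (s : ℂ) :
    sineQuotient s * s = 2 * Complex.sin (Real.pi * s) / Real.pi := by
  simpa [mul_comm, sineQuotient] using
    sub_smul_dslope (fun s : ℂ => 2 * Complex.sin (Real.pi * s) / Real.pi) 0 s

theorem differentiable_sineQuotient : Differentiable ℂ sineQuotient :=
  differentiableOn_univ.1 <| (Complex.differentiableOn_dslope univ_mem).2 <|
    Differentiable.differentiableOn (by fun_prop)

theorem sineQuotient_zero : sineQuotient 0 = 2 := by
  have hpi : (Real.pi : ℂ) ≠ 0 := Complex.ofReal_ne_zero.2 Real.pi_ne_zero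
  have hinner : HasDerivAt (fun s : ℂ => (Real.pi : ℂ) * s) Real.pi 0 := by
    simpa using (hasDerivAt_id (0 : ℂ)).const_mul (Real.pi : ℂ)
  rw [sineQuotient, dslope_same, ((hinner.csin.const_mul 2).div_const (Real.pi : ℂ)).deriv]
  simp [hpi]

theorem sineQuotient_neg (s : ℂ) : sineQuotient (-s) = sineQuotient s := by
  rcases eq_or_ne s 0 with rfl | hs
  · rw [neg_zero]
  · refine mul_right_cancel₀ hs ?_
    rw [sineQuotient_mul_id, ← neg_inj, ← mul_neg, sineQuotient_mul_id, mul_neg, Complex.sin_neg]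
    ring

theorem deriv_sineQuotient_zero : deriv sineQuotient 0 = 0 := by
  have h := deriv_comp_neg sineQuotient 0
  simp only [sineQuotient_neg, neg_zero] at h
  exact self_eq_neg.1 h

/-- The factor `ω^(1-2s) ζ(2s-1)` of the Mellin transform in the closed form. -/
noncomputable def zetaFactor (ω : ℝ) (s : ℂ) : ℂ := (ω : ℂ) ^ (1 - 2 * s) * riemannZeta (2 * s - 1)

/-- `s ↦ s · zetaFactor ω (s + 1)` with the pole of `ζ` at `s = 0` removed. -/
noncomputable def zetaFactorShifted (ω : ℝ) (s : ℂ) : ℂ :=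
  (ω : ℂ) ^ (1 - 2 * (s + 1)) * (riemannZeta₁ (2 * (s + 1) - 1) / 2)

/-- `s ↦ s / (2ω) · ζ(1 + 2δs)` with the pole of `ζ` at `s = 0` removed. -/
noncomputable def zetaCutoff (ω δ : ℝ) (s : ℂ) : ℂ :=
  (ω : ℂ)⁻¹ * (riemannZeta₁ (1 - δ * (2 - 2 * (s + 1))) / (4 * δ))

section ZetaFactors

variable {ω δ : ℝ} {s : ℂ}

theorem zetaFactorShifted_eq (hs : s ≠ 0) :
    zetaFactorShifted ω s = s * zetaFactor ω (s + 1) := by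
  rw [zetaFactorShifted, zetaFactor, riemannZeta_eq_inv_sub_mul (by grind)]
  grind

theorem zetaCutoff_eq (hδ : δ ≠ 0) (hs : s ≠ 0) :
    zetaCutoff ω δ s = s / 2 * (ω : ℂ)⁻¹ * riemannZeta (1 - δ * (2 - 2 * (s + 1))) := by
  have hδ' : (δ : ℂ) ≠ 0 := Complex.ofReal_ne_zero.2 hδ
  rw [zetaCutoff, riemannZeta_eq_inv_sub_mul (by grind)]
  grind

theorem analyticAt_ofReal_cpow {f : ℂ → ℂ} (hω : 0 < ω) (hf : AnalyticAt ℂ f s) :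
    AnalyticAt ℂ (fun z => (ω : ℂ) ^ f z) s :=
  analyticAt_const.cpow hf (by simp [hω])

theorem analyticAt_riemannZeta (hs : s ≠ 1) : AnalyticAt ℂ riemannZeta s :=
  Complex.analyticAt_iff_eventually_differentiableAt.2 <|
    (eventually_ne_nhds hs).mono fun _ hz => differentiableAt_riemannZeta hz

theorem analyticAt_zetaFactor_zero (hω : 0 < ω) : AnalyticAt ℂ (zetaFactor ω) 0 :=
  (analyticAt_ofReal_cpow hω (by fun_prop)).mul <|
    AnalyticAt.fun_comp (g := riemannZeta) (f := fun s : ℂ => 2 * s - 1)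
      (analyticAt_riemannZeta (by norm_num)) (by fun_prop)

theorem analyticAt_zetaFactorShifted (hω : 0 < ω) : AnalyticAt ℂ (zetaFactorShifted ω) s :=
  (analyticAt_ofReal_cpow hω (by fun_prop)).mul <| Differentiable.analyticAt (by fun_prop) s

theorem analyticAt_zetaCutoff : AnalyticAt ℂ (zetaCutoff ω δ) s := by
  unfold zetaCutoff
  exact Differentiable.analyticAt (by fun_prop) s

theorem zetaFactor_zero : zetaFactor ω 0 = ω * riemannZeta (-1) := by simp [zetaFactor]

theorem deriv_zetaFactor_zero (hω : 0 < ω) : deriv (zetaFactor ω) 0 =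
    2 * ω * (deriv riemannZeta (-1) - Real.log ω * riemannZeta (-1)) := by
  have hsub : HasDerivAt (fun s : ℂ => 1 - 2 * s) (-2) 0 := by
    simpa using ((hasDerivAt_id (0 : ℂ)).const_mul 2).const_sub 1
  have hadd : HasDerivAt (fun s : ℂ => 2 * s - 1) 2 0 := by
    simpa using ((hasDerivAt_id (0 : ℂ)).const_mul 2).sub_const 1
  have hzeta : HasDerivAt riemannZeta (deriv riemannZeta (-1)) (2 * 0 - 1) := by
    rw [mul_zero, zero_sub]
    exact (differentiableAt_riemannZeta (by norm_num)).hasDerivAt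
  have hpow := hsub.const_cpow (c := (ω : ℂ)) (.inl (Complex.ofReal_ne_zero.2 hω.ne'))
  refine (hpow.mul (HasDerivAt.comp (h₂ := riemannZeta) 0 hzeta hadd)).deriv.trans ?_
  simp only [mul_zero, sub_zero, Complex.cpow_one, Function.comp_apply, zero_sub,
    Complex.ofReal_log hω.le]
  ring

end ZetaFactors

namespace Profile

variable (P : Profile) {ω δ : ℝ} {s : ℂ}

/-- The Mellin transform at `2 s` without its pole at `s = 0`. -/
noncomputable def mellinRegularZero (s : ℂ) : ℂ :=
  P.near (2 * s) 1 + P.far (2 * s) - P.c / (2 * s - 2) + P.α / (2 * s - 1)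

/-- The Mellin transform at `2 (s + 1)` without its pole at `s = 0`. -/
noncomputable def mellinRegularTwo (s : ℂ) : ℂ :=
  P.near (2 * (s + 1)) 1 + P.far (2 * (s + 1)) + P.α / (2 * (s + 1) - 1) + P.β / (2 * (s + 1))

theorem analyticAt_mellinRegularZero : AnalyticAt ℂ P.mellinRegularZero 0 := by
  have hnear := P.analyticAt_near_two_mul (s := 0) (a := 1) (by simp)
  have hfar := P.analyticAt_far_two_mul (s := 0) (by simp)
  unfold mellinRegularZero
  fun_prop (disch := norm_num)

theorem analyticAt_mellinRegularTwo : AnalyticAt ℂ P.mellinRegularTwo 0 := by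
  have hnear : AnalyticAt ℂ (fun s => P.near (2 * (s + 1)) 1) 0 :=
    (P.analyticAt_near_two_mul (s := 0 + 1) (a := 1) (by simp)).fun_comp (f := fun s : ℂ => s + 1)
      (by fun_prop)
  have hfar : AnalyticAt ℂ (fun s => P.far (2 * (s + 1))) 0 :=
    (P.analyticAt_far_two_mul (s := 0 + 1) (by norm_num)).fun_comp (f := fun s : ℂ => s + 1)
      (by fun_prop)
  unfold mellinRegularTwo
  fun_prop (disch := norm_num)

theorem mellin_two_mul (s : ℂ) : P.mellin (2 * s) = P.mellinRegularZero s + P.β / (2 * s) := rfl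

theorem mellin_two_mul_add_one (s : ℂ) :
    P.mellin (2 * (s + 1)) = P.mellinRegularTwo s - P.c / (2 * s) := by
  rw [mellin, mellinRegularTwo, show 2 * (s + 1) - 2 = 2 * s by ring]
  ring

/-- The part of the closed form that does not involve the Mellin transform. -/
noncomputable def cutoffPart (ω δ : ℝ) (s : ℂ) : ℂ :=
  P.c / (2 * s - 2) * (ω : ℂ)⁻¹ * riemannZeta (1 - δ * (2 - 2 * s)) - P.nearSeries ω δ s

/-- `s ↦ s · closedForm s`, without the removable singularity at `s = 0`. -/
noncomputable def regularZero (ω δ : ℝ) (s : ℂ) : ℂ :=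
  zetaFactor ω s * (P.β / 2 + s * P.mellinRegularZero s) + s * P.cutoffPart ω δ s

/-- `s ↦ s² · closedForm (s + 1)`, without the removable singularity at `s = 0`. -/
noncomputable def regularTwo (ω δ : ℝ) (s : ℂ) : ℂ :=
  zetaFactorShifted ω s * (-(P.c / 2) + s * P.mellinRegularTwo s) + P.c * zetaCutoff ω δ s -
    s * (s * P.nearSeries ω δ (s + 1))

theorem regularZero_eq (hs : s ≠ 0) : P.regularZero ω δ s = s * P.closedForm ω δ s := by
  rw [regularZero, closedForm, cutoffPart, zetaFactor, mellin_two_mul]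
  field_simp
  ring

theorem regularTwo_eq (hδ : δ ≠ 0) (hs : s ≠ 0) :
    P.regularTwo ω δ s = s ^ 2 * P.closedForm ω δ (s + 1) := by
  rw [regularTwo, zetaFactorShifted_eq hs, zetaCutoff_eq hδ hs, closedForm, ← zetaFactor,
    mellin_two_mul_add_one, show 2 * (s + 1) - 2 = 2 * s by ring]
  field_simp
  ring

theorem analyticAt_cutoffPart_zero (hω : 0 < ω) (hδ : 0 < δ) (hδ' : δ ≤ 2 / 5) :
    AnalyticAt ℂ (P.cutoffPart ω δ) 0 := by
  have hδ0 : (δ : ℂ) ≠ 0 := Complex.ofReal_ne_zero.2 hδ.ne'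
  have hzeta : AnalyticAt ℂ (fun s => riemannZeta (1 - δ * (2 - 2 * s))) 0 :=
    AnalyticAt.fun_comp (g := riemannZeta) (f := fun s : ℂ => 1 - δ * (2 - 2 * s))
      (analyticAt_riemannZeta (by simp [hδ0])) (by fun_prop)
  have hnear := P.analyticAt_nearSeries hω hδ hδ' (s := 0) (by simp) (by simp)
  unfold cutoffPart
  fun_prop (disch := norm_num)

theorem analyticAt_nearSeries_add_one (hω : 0 < ω) (hδ : 0 < δ) (hδ' : δ ≤ 2 / 5) :
    AnalyticAt ℂ (fun s => P.nearSeries ω δ (s + 1)) 0 :=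
  (P.analyticAt_nearSeries hω hδ hδ' (s := 0 + 1) (by norm_num) (by norm_num)).fun_comp
    (f := fun s : ℂ => s + 1) (by fun_prop)

theorem analyticAt_regularZero (hω : 0 < ω) (hδ : 0 < δ) (hδ' : δ ≤ 2 / 5) :
    AnalyticAt ℂ (P.regularZero ω δ) 0 := by
  have hzeta := analyticAt_zetaFactor_zero hω
  have hmellin := P.analyticAt_mellinRegularZero
  have hcut := P.analyticAt_cutoffPart_zero hω hδ hδ'
  unfold regularZero
  fun_prop

theorem analyticAt_regularTwo (hω : 0 < ω) (hδ : 0 < δ) (hδ' : δ ≤ 2 / 5) :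
    AnalyticAt ℂ (P.regularTwo ω δ) 0 := by
  have hzeta := analyticAt_zetaFactorShifted hω (s := 0)
  have hcut := analyticAt_zetaCutoff (ω := ω) (δ := δ) (s := 0)
  have hmellin := P.analyticAt_mellinRegularTwo
  have hnear := P.analyticAt_nearSeries_add_one hω hδ hδ'
  unfold regularTwo
  fun_prop

theorem cutoffPart_zero : P.cutoffPart ω δ 0 =
    -(P.c / 2 * (ω : ℂ)⁻¹ * riemannZeta (1 - δ * 2)) - P.nearSeries ω δ 0 := by
  simp only [cutoffPart, mul_zero, zero_sub, sub_zero]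
  ring

theorem hasDerivAt_regularZero (hω : 0 < ω) (hδ : 0 < δ) (hδ' : δ ≤ 2 / 5) :
    HasDerivAt (P.regularZero ω δ)
      (deriv (zetaFactor ω) 0 * (P.β / 2) + zetaFactor ω 0 * P.mellinRegularZero 0 +
        P.cutoffPart ω δ 0) 0 :=
  (hasDerivAt_mul_const_add_id_mul_zero (analyticAt_zetaFactor_zero hω).differentiableAt
    P.analyticAt_mellinRegularZero.continuousAt _).add
    (hasDerivAt_id_mul_zero (P.analyticAt_cutoffPart_zero hω hδ hδ').continuousAt)

theorem hasDerivAt_regularTwo (hω : 0 < ω) (hδ : 0 < δ) (hδ' : δ ≤ 2 / 5) :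
    HasDerivAt (P.regularTwo ω δ)
      (deriv (zetaFactorShifted ω) 0 * -(P.c / 2) +
        zetaFactorShifted ω 0 * P.mellinRegularTwo 0 + P.c * deriv (zetaCutoff ω δ) 0) 0 := by
  have hnear : ContinuousAt (fun s => s * P.nearSeries ω δ (s + 1)) 0 :=
    continuousAt_id.mul (P.analyticAt_nearSeries_add_one hω hδ hδ').continuousAt
  have hsum := ((hasDerivAt_mul_const_add_id_mul_zero
    (analyticAt_zetaFactorShifted hω).differentiableAt
    P.analyticAt_mellinRegularTwo.continuousAt (-(P.c / 2))).fun_add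
    ((analyticAt_zetaCutoff (ω := ω) (δ := δ)).differentiableAt.hasDerivAt.const_mul
      (P.c : ℂ))).fun_sub
    (hasDerivAt_id_mul_zero hnear)
  exact hsum.congr_deriv (by simp)

/-- The series of transforms of the remainder kernel. -/
noncomputable def remainderSeries (ω δ : ℝ) (s : ℂ) : ℂ :=
  ∑' k : ℕ, P.term ω δ remainderKernel (k + 1) s

theorem analyticAt_remainderSeries (hω : 0 < ω) (hδ : 0 < δ) (hs : -1 < s.re) :
    AnalyticAt ℂ (P.remainderSeries ω δ) s :=
  (P.normallySummableAt_term (decaysAt_remainderKernel hs) hω hδ).analyticAt_tsum <|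
    (eventually_lt_re hs).mono fun _ hz k => P.differentiableAt_term
      isEntireKernel_remainderKernel (decaysAt_remainderKernel hz) hω hδ k.succ_pos

theorem remainderSeries_zero : P.remainderSeries ω δ 0 = 0 := by
  simp [remainderSeries, term, transform, remainderKernel_zero]

/-- `2 sin(π s) / π` times the `k`-th transform of `(t² - 1/4)⁻ˢ`; for the profile of the cone
this is `E_{1,k}(s)`. -/
noncomputable def errorTerm (ω δ : ℝ) (k : ℕ) (s : ℂ) : ℂ :=
  2 * Complex.sin (Real.pi * s) / Real.pi * P.term ω δ shiftedKernel k s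

/-- The three pieces of the expansion of `(t² - 1/4)⁻ˢ`, continued to `Re s > -1/2`. -/
noncomputable def splitSum (ω δ : ℝ) (s : ℂ) : ℂ :=
  2 * Complex.sin (Real.pi * s) / Real.pi *
    (P.continuation ω δ s + s / 4 * P.continuation ω δ (s + 1) + P.remainderSeries ω δ s)

/-- `splitSum` near `s = 0`, without its removable singularity. -/
noncomputable def regularSum (ω δ : ℝ) (s : ℂ) : ℂ :=
  sineQuotient s *
    (P.regularZero ω δ s + 1 / 4 * P.regularTwo ω δ s + s * P.remainderSeries ω δ s)

/-- The meromorphic continuation of the sum of all `errorTerm`s, with the limit as its value at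
the removable singularity `s = 0`. -/
noncomputable def extension (ω δ : ℝ) : ℂ → ℂ :=
  Function.update (P.splitSum ω δ) 0 (P.regularSum ω δ 0)

theorem normallySummableAt_errorTerm (hω : 0 < ω) (hδ : 0 < δ) (hs : 1 < s.re) :
    NormallySummableAt (fun k => P.errorTerm ω δ (k + 1)) s :=
  (P.normallySummableAt_term (decaysAt_shiftedKernel hs) hω hδ).mul_left (by fun_prop)

theorem splitSum_eq_tsum (hω : 0 < ω) (hδ : 0 < δ) (hδ' : δ ≤ 2 / 5) (hs : 1 < s.re) :
    P.splitSum ω δ s = ∑' k : ℕ, P.errorTerm ω δ (k + 1) s := by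
  have hs1 : 1 < (s + 1).re := by simp; linarith
  have hpow := (P.normallySummableAt_term (decaysAt_powerKernel hs) hω hδ).summable_norm.of_norm
  have hpow1 := (P.normallySummableAt_term (decaysAt_powerKernel hs1) hω hδ).summable_norm.of_norm
  have hrem := (P.normallySummableAt_term
    (decaysAt_remainderKernel (s := s) (by linarith)) hω hδ).summable_norm.of_norm
  simp only [errorTerm]
  rw [tsum_mul_left, splitSum, P.continuation_eq_powerSeries hω hδ hδ' hs,
    P.continuation_eq_powerSeries hω hδ hδ' hs1,
    tsum_congr fun k => P.term_shiftedKernel hω hδ k.succ_pos hs,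
    ((hpow.hasSum.add (hpow1.hasSum.mul_left (s / 4))).add hrem.hasSum).tsum_eq]
  rfl

theorem meromorphicAt_splitSum (hω : 0 < ω) (hδ : 0 < δ) (hδ' : δ ≤ 2 / 5)
    (hs : -(1 / 2) < s.re) : MeromorphicAt (P.splitSum ω δ) s := by
  have hcont := P.meromorphicAt_continuation hω hδ hδ' hs
  have hcont1 : MeromorphicAt (fun z => P.continuation ω δ (z + 1)) s :=
    (P.meromorphicAt_continuation hω hδ hδ' (s := s + 1) (by simp; linarith)).comp_analyticAt
      (g := fun z : ℂ => z + 1) (by fun_prop)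
  have hrem := (P.analyticAt_remainderSeries hω hδ (s := s) (by linarith)).meromorphicAt
  unfold splitSum
  fun_prop

theorem splitSum_eq_regularSum (hδ : δ ≠ 0) (hs0 : s ≠ 0) (hs : s.re < 1) :
    P.splitSum ω δ s = P.regularSum ω δ s := by
  rw [splitSum, regularSum, P.continuation_eq_closedForm (by linarith),
    P.continuation_eq_closedForm (by simp; linarith), P.regularZero_eq hs0,
    P.regularTwo_eq hδ hs0, ← sineQuotient_mul_id]
  ring

theorem extension_eventuallyEq_regularSum (hδ : δ ≠ 0) :
    P.extension ω δ =ᶠ[𝓝 0] P.regularSum ω δ := by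
  filter_upwards [eventually_re_lt (s := 0) (r := 1) (by simp)] with s hs
  rcases eq_or_ne s 0 with rfl | hs0
  · exact Function.update_self ..
  · rw [extension, Function.update_of_ne hs0, P.splitSum_eq_regularSum hδ hs0 hs]

theorem meromorphicOn_extension (hω : 0 < ω) (hδ : 0 < δ) (hδ' : δ ≤ 2 / 5) :
    MeromorphicOn (P.extension ω δ) {s | -(1 / 2) < s.re} := fun _ hs =>
  (P.meromorphicAt_splitSum hω hδ hδ' hs).update _ _

theorem extension_eqOn_tsum (hω : 0 < ω) (hδ : 0 < δ) (hδ' : δ ≤ 2 / 5) :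
    EqOn (P.extension ω δ) (fun s => ∑' k : ℕ, P.errorTerm ω δ (k + 1) s) {s | 1 < s.re} := by
  intro s (hs : 1 < s.re)
  have hs0 : s ≠ 0 := by
    rintro rfl
    simp [zero_le_one.not_gt] at hs
  rw [extension, Function.update_of_ne hs0, P.splitSum_eq_tsum hω hδ hδ' hs]

theorem analyticAt_extension_zero (hω : 0 < ω) (hδ : 0 < δ) (hδ' : δ ≤ 2 / 5) :
    AnalyticAt ℂ (P.extension ω δ) 0 := by
  have hsine := differentiable_sineQuotient.analyticAt 0
  have hzero := P.analyticAt_regularZero hω hδ hδ'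
  have htwo := P.analyticAt_regularTwo hω hδ hδ'
  have hrem := P.analyticAt_remainderSeries hω hδ (s := 0) (by simp)
  refine AnalyticAt.congr ?_ (P.extension_eventuallyEq_regularSum hδ.ne').symm
  unfold regularSum
  fun_prop

theorem deriv_extension_zero (hω : 0 < ω) (hδ : 0 < δ) (hδ' : δ ≤ 2 / 5) :
    deriv (P.extension ω δ) 0 =
      P.β * deriv (zetaFactor ω) 0 + 2 * zetaFactor ω 0 * P.mellinRegularZero 0 +
        2 * P.cutoffPart ω δ 0 +
        1 / 2 * (zetaFactorShifted ω 0 * P.mellinRegularTwo 0 +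
          P.c * (deriv (zetaCutoff ω δ) 0 - deriv (zetaFactorShifted ω) 0 / 2)) := by
  have hrem := P.analyticAt_remainderSeries hω hδ (s := 0) (by simp)
  have hderiv := (differentiable_sineQuotient 0).hasDerivAt.fun_mul
    (((P.hasDerivAt_regularZero hω hδ hδ').fun_add
      ((P.hasDerivAt_regularTwo hω hδ hδ').const_mul (1 / 4))).fun_add
      (hasDerivAt_id_mul_zero hrem.continuousAt))
  rw [(P.extension_eventuallyEq_regularSum hδ.ne').deriv_eq]
  refine hderiv.deriv.trans ?_
  rw [deriv_sineQuotient_zero, sineQuotient_zero, remainderSeries_zero]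
  ring

section Limit

variable {ι : Type*} {l : Filter ι} {P : ι → Profile} {ω δ : ℝ}

theorem mellinRegularTwo_zero (P : Profile) : P.mellinRegularTwo 0 =
    P.near 2 1 + ∫ u in Ioi (1 : ℝ), (u : ℂ) ^ (-2 : ℂ) * (P.g u : ℂ) := by
  rw [P.integral_Ioi_one (by simp)]
  simp only [mellinRegularTwo, zero_add, mul_one]
  ring

theorem norm_mellinRegularTwo_zero_le {P : Profile} (hg : ∀ u, 1 < u → |P.g u| ≤ P.α) :
    ‖P.mellinRegularTwo 0‖ ≤ P.K / 2 + P.α := by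
  rw [mellinRegularTwo_zero]
  refine (norm_add_le _ _).trans (add_le_add ?_ ?_)
  · refine (P.norm_near_le (by simp; norm_num) zero_le_one).trans_eq ?_
    norm_num
    ring
  · have hpow : IntegrableOn (fun u : ℝ => u ^ (0 - (2 : ℂ).re)) (Ioi 1) :=
      integrableOn_Ioi_rpow_of_lt (by simp) one_pos
    refine (norm_integral_cpow_mul_le (K := P.α) measurableSet_Ioi (Ioi_subset_Ioi zero_le_one)
      (fun u hu => by simpa using hg u hu) hpow).trans_eq ?_
    rw [integral_Ioi_rpow_of_lt (by simp) one_pos]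
    norm_num

theorem tendsto_near_zero (hK : Tendsto (fun i => (P i).K) l (𝓝 0)) :
    Tendsto (fun i => (P i).near 0 1) l (𝓝 0) :=
  squeeze_zero_norm (fun i => (P i).norm_near_le (by simp) zero_le_one)
    (by simpa using hK.mul_const _)

theorem tendsto_nearSeries_zero (hω : 0 < ω) (hδ : δ ≤ 2 / 5)
    (hK : Tendsto (fun i => (P i).K) l (𝓝 0)) :
    Tendsto (fun i => (P i).nearSeries ω δ 0) l (𝓝 0) :=
  squeeze_zero_norm (fun i => (P i).norm_nearSeries_zero_le hω hδ)
    (by simpa using (hK.div_const 4).mul_const _)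

theorem tendsto_mellinRegularTwo_zero (hK : Tendsto (fun i => (P i).K) l (𝓝 0))
    (hα : Tendsto (fun i => (P i).α) l (𝓝 0)) (hg : ∀ i u, 1 < u → |(P i).g u| ≤ (P i).α) :
    Tendsto (fun i => (P i).mellinRegularTwo 0) l (𝓝 0) :=
  squeeze_zero_norm (fun i => norm_mellinRegularTwo_zero_le (hg i))
    (by simpa using (hK.div_const 2).add hα)

theorem tendsto_cutoffPart_zero (hω : 0 < ω) (hδ : δ ≤ 2 / 5)
    (hc : Tendsto (fun i => ((P i).c : ℂ)) l (𝓝 0)) (hK : Tendsto (fun i => (P i).K) l (𝓝 0)) :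
    Tendsto (fun i => (P i).cutoffPart ω δ 0) l (𝓝 0) := by
  simpa [cutoffPart_zero] using
    (((hc.div_const 2).mul_const (ω : ℂ)⁻¹).mul_const (riemannZeta (1 - δ * 2))).neg.sub
      (tendsto_nearSeries_zero hω hδ hK)

theorem tendsto_mellinRegularZero_sub_far (hc : Tendsto (fun i => ((P i).c : ℂ)) l (𝓝 0))
    (hK : Tendsto (fun i => (P i).K) l (𝓝 0)) (hα : Tendsto (fun i => ((P i).α : ℂ)) l (𝓝 0)) :
    Tendsto (fun i => (P i).mellinRegularZero 0 - (P i).far 0) l (𝓝 0) := by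
  have hsum := ((tendsto_near_zero hK).add (hc.div_const 2)).sub hα
  simp only [zero_div, add_zero, sub_zero] at hsum
  refine hsum.congr fun i => ?_
  simp only [mellinRegularZero, mul_zero]
  ring

theorem tendsto_deriv_extension_zero_sub (hω : 0 < ω) (hδ : 0 < δ) (hδ' : δ ≤ 2 / 5)
    (hc : Tendsto (fun i => (P i).c) l (𝓝 0)) (hK : Tendsto (fun i => (P i).K) l (𝓝 0))
    (hα : Tendsto (fun i => (P i).α) l (𝓝 0)) (hg : ∀ i u, 1 < u → |(P i).g u| ≤ (P i).α) :
    Tendsto (fun i => deriv ((P i).extension ω δ) 0 -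
      ((P i).β * deriv (zetaFactor ω) 0 + 2 * zetaFactor ω 0 * (P i).far 0)) l (𝓝 0) := by
  have hcC : Tendsto (fun i => ((P i).c : ℂ)) l (𝓝 0) := mod_cast hc.ofReal
  have hαC : Tendsto (fun i => ((P i).α : ℂ)) l (𝓝 0) := mod_cast hα.ofReal
  have hzero := (tendsto_mellinRegularZero_sub_far hcC hK hαC).const_mul (2 * zetaFactor ω 0)
  have hcut := (tendsto_cutoffPart_zero (δ := δ) hω hδ' hcC hK).const_mul 2
  have htwo := ((tendsto_mellinRegularTwo_zero hK hα hg).const_mul (zetaFactorShifted ω 0)).add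
    (hcC.mul_const (deriv (zetaCutoff ω δ) 0 - deriv (zetaFactorShifted ω) 0 / 2))
  have hsum := (hzero.add hcut).add (htwo.const_mul (1 / 2))
  simp only [mul_zero, zero_mul, add_zero] at hsum
  refine hsum.congr fun i => ?_
  rw [(P i).deriv_extension_zero hω hδ hδ']
  ring

end Limit

end Profile

/-! ### The profile of the cone -/

section ConeProfile

open Real

variable {η u : ℝ}

/-- The radical `√(1 + u² sinh² η)` in the integrand of `E_{1,k}`. -/
noncomputable def coneRadical (η u : ℝ) : ℝ := √(1 + u ^ 2 * sinh η ^ 2)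

/-- The second factor of the integrand of `E_{1,k}`. -/
noncomputable def coneIntegrand (η u : ℝ) : ℝ :=
  log (u * cosh η + coneRadical η u) - log (u + 1)

/-- The derivative of `coneIntegrand`. -/
noncomputable def coneSlope (η u : ℝ) : ℝ :=
  (cosh η + u * sinh η ^ 2 / coneRadical η u) / (u * cosh η + coneRadical η u) - 1 / (u + 1)

theorem one_le_coneRadical (η u : ℝ) : 1 ≤ coneRadical η u :=
  one_le_sqrt.2 (by nlinarith [sq_nonneg (u * sinh η)])

theorem coneRadical_sq (η u : ℝ) : coneRadical η u ^ 2 = 1 + u ^ 2 * sinh η ^ 2 :=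
  sq_sqrt (by positivity)

theorem coneRadical_one (η : ℝ) : coneRadical η 1 = cosh η := by
  rw [coneRadical, one_pow, one_mul, add_comm, ← cosh_sq, sqrt_sq (cosh_pos η).le]

theorem mul_sinh_le_coneRadical (η u : ℝ) : u * sinh η ≤ coneRadical η u :=
  le_sqrt_of_sq_le (by nlinarith)

theorem coneRadical_le (hη : 0 ≤ η) (hu : 0 ≤ u) : coneRadical η u ≤ 1 + u * sinh η := by
  have hsinh : 0 ≤ sinh η := sinh_nonneg_iff.2 hη
  rw [coneRadical, sqrt_le_left (by positivity)]
  nlinarith [mul_nonneg hu hsinh]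

theorem coneRadical_sub_one_le (η u : ℝ) : coneRadical η u - 1 ≤ u ^ 2 * sinh η ^ 2 := by
  nlinarith [one_le_coneRadical η u, coneRadical_sq η u]

theorem mul_cosh_add_coneRadical_pos (η : ℝ) (hu : 0 ≤ u) :
    0 < u * cosh η + coneRadical η u := by
  nlinarith [one_le_coneRadical η u, cosh_pos η]

theorem coneIntegrand_zero (η : ℝ) : coneIntegrand η 0 = 0 := by
  simp [coneIntegrand, coneRadical]

theorem coneIntegrand_nonneg (η : ℝ) (hu : 0 ≤ u) : 0 ≤ coneIntegrand η u :=
  sub_nonneg.2 <| log_le_log (by linarith)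
    (by nlinarith [one_le_coneRadical η u, one_le_cosh η])

theorem coneIntegrand_le (hη : 0 ≤ η) (hu : 0 ≤ u) : coneIntegrand η u ≤ η := by
  have hexp : η + log (u + 1) = log (exp η * (u + 1)) := by
    rw [log_mul (exp_pos η).ne' (by linarith), log_exp]
  rw [coneIntegrand, sub_le_iff_le_add, hexp]
  refine log_le_log (mul_cosh_add_coneRadical_pos η hu) ?_
  rw [← cosh_add_sinh η]
  nlinarith [coneRadical_le hη hu, one_le_cosh η, sinh_nonneg_iff.2 hη]

theorem hasDerivAt_coneRadical (η u : ℝ) :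
    HasDerivAt (coneRadical η) (u * sinh η ^ 2 / coneRadical η u) u := by
  have hsq : HasDerivAt (fun u : ℝ => 1 + u ^ 2 * sinh η ^ 2) (2 * u * sinh η ^ 2) u := by
    simpa using ((hasDerivAt_pow 2 u).mul_const (sinh η ^ 2)).const_add 1
  refine (hsq.sqrt (by positivity)).congr_deriv ?_
  rw [coneRadical, mul_assoc, mul_div_mul_left _ _ two_ne_zero]

theorem hasDerivAt_coneIntegrand (η : ℝ) (hu : 0 ≤ u) :
    HasDerivAt (coneIntegrand η) (coneSlope η u) u := by
  have hnum := ((hasDerivAt_id u).mul_const (cosh η)).add (hasDerivAt_coneRadical η u)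
  rw [one_mul] at hnum
  exact (hnum.log (mul_cosh_add_coneRadical_pos η hu).ne').sub
    (((hasDerivAt_id u).add_const 1).log (by simp; linarith))

theorem continuousOn_coneIntegrand (η : ℝ) : ContinuousOn (coneIntegrand η) (Ioi 0) :=
  fun _ hu => (hasDerivAt_coneIntegrand η (le_of_lt hu)).continuousAt.continuousWithinAt

theorem coneSlope_sub_eq (η : ℝ) (hu : 0 ≤ u) :
    coneSlope η u - (cosh η - 1) =
      (cosh η * (coneRadical η u - 1) - (cosh η - 1) * (cosh η * u * (coneRadical η u - 1) +
          (u + 1) * u ^ 2 * sinh η ^ 2 + cosh η * u ^ 2 * coneRadical η u)) /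
        (coneRadical η u * (u * cosh η + coneRadical η u) * (u + 1)) := by
  have hy : coneRadical η u ≠ 0 := (zero_lt_one.trans_le (one_le_coneRadical η u)).ne'
  have hnum := (mul_cosh_add_coneRadical_pos η hu).ne'
  have hu1 : u + 1 ≠ 0 := by linarith
  rw [mul_comm] at hnum
  have hsq := coneRadical_sq η u
  rw [sinh_sq] at hsq
  rw [coneSlope, sinh_sq]
  generalize coneRadical η u = y, cosh η = C at *
  field_simp
  linear_combination (-C - C * u + u) * hsq

theorem coneRadical_le_denominator (η : ℝ) (hu : 0 ≤ u) :
    coneRadical η u ≤ coneRadical η u * (u * cosh η + coneRadical η u) * (u + 1) := by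
  have hy := one_le_coneRadical η u
  have hnum : 1 ≤ u * cosh η + coneRadical η u := by nlinarith [one_le_cosh η]
  rw [mul_assoc]
  exact le_mul_of_one_le_right (by linarith) (one_le_mul_of_one_le_of_one_le hnum (by linarith))

theorem add_one_le_denominator (η : ℝ) (hu : 0 ≤ u) :
    u + 1 ≤ coneRadical η u * (u * cosh η + coneRadical η u) * (u + 1) := by
  have hy := one_le_coneRadical η u
  have hnum : 1 ≤ u * cosh η + coneRadical η u := by nlinarith [one_le_cosh η]
  exact le_mul_of_one_le_left (by linarith) (one_le_mul_of_one_le_of_one_le hy hnum)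

/-- The constant in `coneIntegrand η u = (cosh η - 1) u + O(u³)`. -/
noncomputable def coneConstant (η : ℝ) : ℝ :=
  cosh η ^ 2 * sinh η ^ 2 + (cosh η - 1) * (sinh η ^ 2 + cosh η)

theorem abs_coneSlope_sub_le (η : ℝ) (hu : 0 ≤ u) :
    |coneSlope η u - (cosh η - 1)| ≤ coneConstant η * u ^ 2 := by
  have hy := one_le_coneRadical η u
  have hy1 := coneRadical_sub_one_le η u
  have hC := one_le_cosh η
  have hyD := coneRadical_le_denominator η hu
  have huD := add_one_le_denominator η hu
  rw [coneSlope_sub_eq η hu, coneConstant]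
  set C := cosh η
  set y := coneRadical η u
  set Q := sinh η ^ 2
  have : 0 ≤ Q := by positivity
  have hc0 : 0 ≤ C - 1 := by linarith
  set D := y * (u * C + y) * (u + 1)
  have hD1 : 1 ≤ D := by linarith
  have hpos : C * (y - 1) ≤ C * (u ^ 2 * Q) * D :=
    (mul_le_mul_of_nonneg_left hy1 (by linarith)).trans
      (le_mul_of_one_le_right (by positivity) hD1)
  have hneg : C * u * (y - 1) + (u + 1) * u ^ 2 * Q + C * u ^ 2 * y ≤
      (C * Q + Q + C) * u ^ 2 * D := by
    calc C * u * (y - 1) + (u + 1) * u ^ 2 * Q + C * u ^ 2 * y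
        ≤ C * D * (u ^ 2 * Q) + D * u ^ 2 * Q + C * u ^ 2 * D := by
          gcongr
          linarith
      _ = (C * Q + Q + C) * u ^ 2 * D := by ring
  have hpos0 : 0 ≤ C * (y - 1) := mul_nonneg (by linarith) (by linarith)
  have hneg0 : 0 ≤ C * u * (y - 1) + (u + 1) * u ^ 2 * Q + C * u ^ 2 * y :=
    add_nonneg (add_nonneg (mul_nonneg (by positivity) (by linarith)) (by positivity))
      (by positivity)
  rw [abs_div, abs_of_pos (zero_lt_one.trans_le hD1), div_le_iff₀ (by linarith)]
  refine (abs_sub _ _).trans ?_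
  rw [abs_of_nonneg hpos0, abs_of_nonneg (mul_nonneg hc0 hneg0)]
  calc C * (y - 1) + (C - 1) * (C * u * (y - 1) + (u + 1) * u ^ 2 * Q + C * u ^ 2 * y)
      ≤ C * (u ^ 2 * Q) * D + (C - 1) * ((C * Q + Q + C) * u ^ 2 * D) := by gcongr
    _ = (C ^ 2 * Q + (C - 1) * (Q + C)) * u ^ 2 * D := by ring

theorem abs_coneIntegrand_sub_linear_le (η : ℝ) (hu : 0 < u) :
    |coneIntegrand η u - (cosh η - 1) * u| ≤ coneConstant η * u ^ 3 := by
  have hderiv : ∀ x ∈ Icc 0 u, HasDerivWithinAt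
      (fun x => coneIntegrand η x - (cosh η - 1) * x) (coneSlope η x - (cosh η - 1)) (Icc 0 u) x :=
    fun x hx => by
      simpa using ((hasDerivAt_coneIntegrand η hx.1).fun_sub
        ((hasDerivAt_id' x).const_mul (cosh η - 1))).hasDerivWithinAt
  have hK : 0 ≤ coneConstant η := by
    have := one_le_cosh η
    exact add_nonneg (by positivity) (mul_nonneg (by linarith) (by positivity))
  have hmean := (convex_Icc 0 u).norm_image_sub_le_of_norm_hasDerivWithin_le hderiv
    (fun x hx => (abs_coneSlope_sub_le η hx.1).trans
      (mul_le_mul_of_nonneg_left (pow_le_pow_left₀ hx.1 hx.2 2) hK))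
    (left_mem_Icc.2 hu.le) (right_mem_Icc.2 hu.le)
  simpa [coneIntegrand_zero, abs_of_pos hu, mul_assoc, ← pow_succ] using hmean

theorem coneRadical_le_add_inv (hη : 0 < η) (hu : 0 < u) :
    coneRadical η u ≤ u * sinh η + 1 / (u * sinh η) := by
  have hv : 0 < u * sinh η := mul_pos hu (sinh_pos_iff.2 hη)
  refine sqrt_le_iff.2 ⟨by positivity, ?_⟩
  have : 0 < 1 / (u * sinh η) := by positivity
  have hinv : u * sinh η * (1 / (u * sinh η)) = 1 := mul_one_div_cancel hv.ne'
  nlinarith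

theorem log_coneRatio_mem_Icc (hη : 0 < η) (hu : 0 < u) :
    log ((u * cosh η + coneRadical η u) / (u * exp η)) ∈ Icc 0 (1 / sinh η / u ^ 2) := by
  have hone : 1 ≤ (u * cosh η + coneRadical η u) / (u * exp η) := by
    rw [one_le_div (by positivity), ← cosh_add_sinh η]
    linarith [mul_sinh_le_coneRadical η u]
  refine ⟨log_nonneg hone, (log_le_sub_one_of_pos (zero_lt_one.trans_le hone)).trans ?_⟩
  calc (u * cosh η + coneRadical η u) / (u * exp η) - 1
      = (coneRadical η u - u * sinh η) / (u * exp η) := by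
        rw [← cosh_add_sinh η, div_sub_one (by rw [cosh_add_sinh]; positivity)]
        ring
    _ ≤ 1 / (u * sinh η) / (u * 1) := by
        gcongr
        · linarith [coneRadical_le_add_inv hη hu]
        · exact one_le_exp hη.le
    _ = 1 / sinh η / u ^ 2 := by field_simp

theorem inv_sub_log_one_add_inv_mem_Icc (hu : 0 < u) :
    1 / u - log (1 + 1 / u) ∈ Icc 0 (1 / u ^ 2) := by
  have hupper := log_le_sub_one_of_pos (by positivity : 0 < 1 + 1 / u)
  have hlower := one_sub_inv_le_log_of_pos (by positivity : 0 < 1 + 1 / u)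
  have hgap : 1 / u ^ 2 - (1 / u - (1 - (1 + 1 / u)⁻¹)) = 1 / (u ^ 2 * (u + 1)) := by
    field_simp
    ring
  have hgap0 : 0 ≤ 1 / (u ^ 2 * (u + 1)) := by positivity
  exact ⟨by linarith, by linarith⟩

theorem abs_coneIntegrand_sub_limit_le (hη : 0 < η) (hu : 0 < u) :
    |coneIntegrand η u - η - -1 / u| ≤ (1 + 1 / sinh η) / u ^ 2 := by
  have hsplit : coneIntegrand η u - η - -1 / u =
      log ((u * cosh η + coneRadical η u) / (u * exp η)) + (1 / u - log (1 + 1 / u)) := by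
    rw [one_add_div hu.ne', log_div (mul_cosh_add_coneRadical_pos η hu.le).ne' (by positivity),
      log_div (by linarith) hu.ne', log_mul hu.ne' (exp_pos η).ne', log_exp, coneIntegrand]
    ring
  obtain ⟨hratio0, hratio⟩ := log_coneRatio_mem_Icc hη hu
  obtain ⟨hinv0, hinv⟩ := inv_sub_log_one_add_inv_mem_Icc hu
  rw [hsplit, abs_of_nonneg (add_nonneg hratio0 hinv0), add_div 1]
  linarith

/-- The profile of the cone with boundary parameter `η`. -/
noncomputable def coneProfile (hη : 0 < η) : Profile where
  g := coneIntegrand η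
  c := cosh η - 1
  K := coneConstant η
  α := η
  β := -1
  L := 1 + 1 / sinh η
  continuousOn_g := continuousOn_coneIntegrand η
  abs_sub_linear_le _ hu := abs_coneIntegrand_sub_linear_le η hu
  abs_sub_limit_le _ hu := abs_coneIntegrand_sub_limit_le hη (zero_lt_one.trans_le hu)

/-- A primitive of `coneIntegrand`. -/
noncomputable def conePrimitive (η u : ℝ) : ℝ :=
  u * coneIntegrand η u - log (cosh η + coneRadical η u)

theorem hasDerivAt_conePrimitive (η : ℝ) (hu : 0 ≤ u) :
    HasDerivAt (conePrimitive η) (coneIntegrand η u) u := by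
  have hy : 0 < coneRadical η u := zero_lt_one.trans_le (one_le_coneRadical η u)
  have hnum := mul_cosh_add_coneRadical_pos η hu
  have hC := cosh_pos η
  have hderiv := ((hasDerivAt_id u).mul (hasDerivAt_coneIntegrand η hu)).sub
    (((hasDerivAt_coneRadical η u).const_add (cosh η)).log (by positivity))
  refine hderiv.congr_deriv ?_
  have hsq := coneRadical_sq η u
  rw [sinh_sq] at hsq
  have hcancel : u * coneSlope η u =
      u * sinh η ^ 2 / coneRadical η u / (cosh η + coneRadical η u) := by
    rw [coneSlope, sinh_sq]
    generalize coneRadical η u = y, cosh η = C at *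
    field_simp
    linear_combination (-u * y) * hsq
  simp only [id, one_mul, hcancel]
  ring

theorem tendsto_coneRadical_div (hη : 0 < η) :
    Tendsto (fun u => (cosh η + coneRadical η u) / u) atTop (𝓝 (sinh η)) := by
  have hupper : Tendsto (fun u : ℝ => sinh η + (1 + cosh η) * u⁻¹) atTop (𝓝 (sinh η)) := by
    simpa using (tendsto_inv_atTop_zero.const_mul (1 + cosh η)).const_add (sinh η)
  refine tendsto_of_tendsto_of_tendsto_of_le_of_le' tendsto_const_nhds hupper ?_ ?_
  · filter_upwards [eventually_gt_atTop 0] with u hu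
    rw [le_div_iff₀ hu]
    linarith [mul_sinh_le_coneRadical η u, cosh_pos η]
  · filter_upwards [eventually_gt_atTop 0] with u hu
    rw [div_le_iff₀ hu, add_mul, inv_mul_cancel_right₀ hu.ne']
    linarith [coneRadical_le hη.le hu.le]

theorem tendsto_mul_coneIntegrand_sub (hη : 0 < η) :
    Tendsto (fun u => u * (coneIntegrand η u - η)) atTop (𝓝 (-1)) := by
  have hrest : Tendsto (fun u => u * (coneIntegrand η u - η) + 1) atTop (𝓝 0) := by
    refine squeeze_zero_norm' (a := fun u => (1 + 1 / sinh η) * u⁻¹) ?_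
      (by simpa using tendsto_inv_atTop_zero.const_mul (1 + 1 / sinh η))
    filter_upwards [eventually_gt_atTop 0] with u hu
    calc ‖u * (coneIntegrand η u - η) + 1‖ = u * |coneIntegrand η u - η - -1 / u| := by
          rw [← abs_of_pos hu, ← abs_mul, abs_of_pos hu, Real.norm_eq_abs]
          congr 1
          field_simp
          ring
      _ ≤ u * ((1 + 1 / sinh η) / u ^ 2) :=
          mul_le_mul_of_nonneg_left (abs_coneIntegrand_sub_limit_le hη hu) hu.le
      _ = (1 + 1 / sinh η) * u⁻¹ := by field_simp
  simpa using hrest.sub_const 1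

theorem tendsto_conePrimitive_sub (hη : 0 < η) :
    Tendsto (fun u => conePrimitive η u - η * u - -1 * log u) atTop
      (𝓝 (-1 - log (sinh η))) := by
  refine ((tendsto_mul_coneIntegrand_sub hη).sub
    ((tendsto_coneRadical_div hη).log (sinh_pos_iff.2 hη).ne')).congr' ?_
  filter_upwards [eventually_gt_atTop 0] with u hu
  have hden : 0 < cosh η + coneRadical η u :=
    add_pos (cosh_pos η) (zero_lt_one.trans_le (one_le_coneRadical η u))
  rw [log_div hden.ne' hu.ne', conePrimitive]
  ring

theorem conePrimitive_one (η : ℝ) : conePrimitive η 1 = -log 2 := by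
  rw [conePrimitive, coneIntegrand, coneRadical_one, one_mul, one_mul, one_add_one_eq_two]
  ring

theorem far_coneProfile_zero (hη : 0 < η) :
    (coneProfile hη).far 0 = ((-1 + log 2 + η - log (sinh η) : ℝ) : ℂ) := by
  have hderiv : ∀ x ∈ Ici (1 : ℝ), HasDerivAt (fun u => conePrimitive η u - η * u - -1 * log u)
      (coneIntegrand η x - η - -1 / x) x := fun x (hx : 1 ≤ x) => by
    refine (((hasDerivAt_conePrimitive η (by linarith)).sub ((hasDerivAt_id x).const_mul η)).sub
      ((hasDerivAt_log (by linarith)).const_mul (-1))).congr_deriv ?_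
    simp [neg_div]
  have hint : IntegrableOn (fun u => coneIntegrand η u - η - -1 / u) (Ioi 1) := by
    simpa [coneProfile, IntegrableOn] using
      ((coneProfile hη).integrableOn_far (w := 0) (by simp)).re
  have hfar : (coneProfile hη).far 0 =
      ((∫ u in Ioi (1 : ℝ), (coneIntegrand η u - η - -1 / u) : ℝ) : ℂ) := by
    rw [← integral_complex_ofReal]
    simp [Profile.far, coneProfile]
  rw [hfar, integral_Ioi_of_hasDerivAt_of_tendsto' hderiv hint (tendsto_conePrimitive_sub hη),
    conePrimitive_one]
  simp
  ring

end ConeProfile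

/-! ### The limit `η → 0` -/

section ConeLimit

variable {ω δ η : ℝ}

/-- `E_{1,k}(s)` for a real cone parameter `ω`. -/
noncomputable def coneError (ω η δ : ℝ) (k : ℕ) (s : ℂ) : ℂ :=
  2 * Complex.sin (Real.pi * s) / Real.pi * (k * ω) *
    ∫ u in Ioi ((k : ℝ) ^ (δ - 1) / ω),
      (((k : ℝ) ^ 2 * ω ^ 2 * u ^ 2 - 1 / 4 : ℝ) : ℂ) ^ (-s) * (coneIntegrand η u : ℂ)

theorem coneError_eq_errorTerm (hη : 0 < η) :
    coneError ω η δ = (coneProfile hη).errorTerm ω δ := by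
  ext k s
  simp only [coneError, Profile.errorTerm, Profile.term, Profile.transform, shiftedKernel, cutoff,
    mul_pow, Complex.ofReal_mul, Complex.ofReal_natCast, mul_assoc, coneProfile]

theorem tendsto_log_sinh_sub_log :
    Tendsto (fun η => Real.log (Real.sinh η) - Real.log η) (𝓝[>] 0) (𝓝 0) := by
  have hslope : Tendsto (fun η => η⁻¹ * Real.sinh η) (𝓝[>] 0) (𝓝 1) := by
    simpa using (Real.hasDerivAt_sinh 0).tendsto_slope_zero_right
  have hlog := hslope.log one_ne_zero
  rw [Real.log_one] at hlog
  refine hlog.congr' ?_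
  filter_upwards [self_mem_nhdsWithin] with η (hη : 0 < η)
  rw [Real.log_mul (inv_ne_zero hη.ne') (Real.sinh_pos_iff.2 hη).ne', Real.log_inv]
  ring

theorem riemannZeta_neg_one : riemannZeta (-1) = -1 / 12 := by
  have hbernoulli := riemannZeta_neg_nat_eq_bernoulli 1
  rw [one_add_one_eq_two, bernoulli_two] at hbernoulli
  norm_num at hbernoulli
  exact hbernoulli.trans (by norm_num)

theorem abs_g_coneProfile_le (hη : 0 < η) {u : ℝ} (hu : 1 < u) :
    |(coneProfile hη).g u| ≤ (coneProfile hη).α := by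
  have hu0 : 0 ≤ u := zero_le_one.trans hu.le
  exact (abs_of_nonneg (coneIntegrand_nonneg η hu0)).trans_le (coneIntegrand_le hη.le hu0)

/-- The continuation of the sum of the `coneError`s; zero for `η ≤ 0`. -/
noncomputable def coneExtension (ω δ η : ℝ) : ℂ → ℂ :=
  if hη : 0 < η then (coneProfile hη).extension ω δ else 0

theorem coneExtension_of_pos (hη : 0 < η) :
    coneExtension ω δ η = (coneProfile hη).extension ω δ :=
  dif_pos hη

theorem tendsto_deriv_extension_coneProfile (hω : 0 < ω) (hδ : 0 < δ) (hδ' : δ ≤ 2 / 5) :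
    Tendsto (fun η : Ioi (0 : ℝ) => deriv ((coneProfile η.2).extension ω δ) 0 -
      (-deriv (zetaFactor ω) 0 + 2 * zetaFactor ω 0 * (coneProfile η.2).far 0))
      (comap (↑) (𝓝[>] (0 : ℝ))) (𝓝 0) := by
  have hval : Tendsto ((↑) : Ioi (0 : ℝ) → ℝ) (comap (↑) (𝓝[>] (0 : ℝ))) (𝓝 0) :=
    tendsto_comap.mono_right nhdsWithin_le_nhds
  have hc : Tendsto (fun η => Real.cosh η - 1) (𝓝 0) (𝓝 0) :=
    Continuous.tendsto' (by fun_prop) 0 0 (by simp)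
  have hK : Tendsto coneConstant (𝓝 0) (𝓝 0) :=
    Continuous.tendsto' (by unfold coneConstant; fun_prop) 0 0 (by simp [coneConstant])
  simpa [coneProfile] using! Profile.tendsto_deriv_extension_zero_sub
    (P := fun η : Ioi (0 : ℝ) => coneProfile η.2) hω hδ hδ' (hc.comp hval) (hK.comp hval) hval
    fun η _ hu => abs_g_coneProfile_le η.2 hu

theorem tendsto_deriv_coneExtension (hω : 0 < ω) (hδ : 0 < δ) (hδ' : δ ≤ 2 / 5) :
    Tendsto (fun η => deriv (coneExtension ω δ η) 0 -
      (-deriv (zetaFactor ω) 0 + 2 * zetaFactor ω 0 *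
        ((-1 + Real.log 2 + η - Real.log (Real.sinh η) : ℝ) : ℂ))) (𝓝[>] 0) (𝓝 0) := by
  refine (tendsto_comap'_iff (i := ((↑) : Ioi (0 : ℝ) → ℝ))
    (by rw [Subtype.range_coe]; exact self_mem_nhdsWithin)).1 ?_
  refine (tendsto_deriv_extension_coneProfile hω hδ hδ').congr fun η => ?_
  rw [Function.comp_apply, coneExtension_of_pos η.2, far_coneProfile_zero η.2]

theorem tendsto_deriv_coneExtension_sub_asymptotic (hω : 0 < ω) (hδ : 0 < δ) (hδ' : δ ≤ 2 / 5) :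
    Tendsto (fun η => deriv (coneExtension ω δ η) 0 -
      (2 * (ω : ℂ) * (-riemannZeta (-1) - deriv riemannZeta (-1) +
          riemannZeta (-1) * (Real.log (2 * ω) : ℂ)) + ((ω : ℂ) / 6) * (Real.log η : ℂ)))
      (𝓝[>] 0) (𝓝 0) := by
  have hη : Tendsto (fun η : ℝ => η) (𝓝[>] 0) (𝓝 0) := nhdsWithin_le_nhds
  have hlog : Tendsto (fun η : ℝ => ((η - (Real.log (Real.sinh η) - Real.log η) : ℝ) : ℂ))
      (𝓝[>] 0) (𝓝 0) := by
    simpa using (hη.sub tendsto_log_sinh_sub_log).ofReal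
  have hsum := (tendsto_deriv_coneExtension hω hδ hδ').add (hlog.const_mul (2 * zetaFactor ω 0))
  simp only [mul_zero, add_zero] at hsum
  refine hsum.congr fun η => ?_
  rw [zetaFactor_zero, deriv_zetaFactor_zero hω, riemannZeta_neg_one,
    Real.log_mul two_ne_zero hω.ne']
  push_cast
  ring

theorem normallySummableAt_coneError (hω : 0 < ω) (hη : 0 < η) (hδ : 0 < δ) {s : ℂ}
    (hs : 1 < s.re) : NormallySummableAt (fun k => coneError ω η δ (k + 1)) s := by
  rw [coneError_eq_errorTerm hη]
  exact (coneProfile hη).normallySummableAt_errorTerm hω hδ hs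

end ConeLimit

end ConeZeta

open ConeZeta in
theorem statement7_general (ω : ℝ) (hω : 0 < ω) (δ : ℝ) (hδ0 : 0 < δ) (hδ1 : δ ≤ 2 / 5) :
    ∃ F : ℝ → ℂ → ℂ,
      (∀ η : ℝ, 0 < η →
        (∀ s ∈ {s : ℂ | 1 < s.re}, Summable (fun k : ℕ => ‖coneError ω η δ (k + 1) s‖)) ∧
        TendstoLocallyUniformlyOn
          (fun (n : ℕ) (s : ℂ) => ∑ k ∈ Finset.range n, coneError ω η δ (k + 1) s)
          (fun s : ℂ => ∑' k : ℕ, coneError ω η δ (k + 1) s) atTop {s : ℂ | 1 < s.re} ∧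
        MeromorphicOn (F η) {s : ℂ | -(1 / 2) < s.re} ∧
        Set.EqOn (F η) (fun s : ℂ => ∑' k : ℕ, coneError ω η δ (k + 1) s) {s : ℂ | 1 < s.re} ∧
        AnalyticAt ℂ (F η) 0) ∧
      Tendsto
        (fun η : ℝ => deriv (F η) 0 -
          (2 * (ω : ℂ) * (-riemannZeta (-1) - deriv riemannZeta (-1) +
              riemannZeta (-1) * (Real.log (2 * ω) : ℂ)) +
            ((ω : ℂ) / 6) * (Real.log η : ℂ)))
        (nhdsWithin 0 (Set.Ioi 0)) (nhds 0) := by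
  refine ⟨coneExtension ω δ, fun η hη => ?_,
    tendsto_deriv_coneExtension_sub_asymptotic hω hδ0 hδ1⟩
  have hsummable {s : ℂ} (hs : 1 < s.re) := normallySummableAt_coneError hω hη hδ0 hs
  rw [coneExtension_of_pos hη]
  refine ⟨fun s hs => (hsummable hs).summable_norm,
    NormallySummableAt.tendstoLocallyUniformlyOn fun s hs => hsummable hs,
    (coneProfile hη).meromorphicOn_extension hω hδ0 hδ1, ?_,
    (coneProfile hη).analyticAt_extension_zero hω hδ0 hδ1⟩
  rw [coneError_eq_errorTerm hη]
  exact (coneProfile hη).extension_eqOn_tsum hω hδ0 hδ1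

/-- for fixed integer `ω ≥ 1` and `δ ∈ (0,1/8)`, for every `η > 0` the series
`ζ_{E₁}(s) = Σ_{k≥1} E_{1,k}(s)` converges absolutely and locally uniformly on the strip
`1 < Re(s) < 2`, its sum extends to a meromorphic function on the half-plane `Re(s) > -1/2`
which is holomorphic at `s = 0`, and the derivative at `0` satisfies
`ζ_{E₁}'(0) = 2ω·(-ζ(-1) - ζ'(-1) + ζ(-1)·log(2ω)) + (ω/6)·log η + o(1)` as `η → 0⁺`. -/
theorem statement7 (ω : ℕ) (hω : 1 ≤ ω) (δ : ℝ) (hδ0 : 0 < δ) (hδ1 : δ < 1 / 8) :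
    ∃ F : ℝ → ℂ → ℂ,
      (∀ η : ℝ, 0 < η →
        (∀ s ∈ {s : ℂ | 1 < s.re ∧ s.re < 2},
          Summable (fun k : ℕ => ‖coneE1 ω η δ (k + 1) s‖)) ∧
        TendstoLocallyUniformlyOn
          (fun (n : ℕ) (s : ℂ) => ∑ k ∈ Finset.range n, coneE1 ω η δ (k + 1) s)
          (fun s : ℂ => ∑' k : ℕ, coneE1 ω η δ (k + 1) s)
          atTop {s : ℂ | 1 < s.re ∧ s.re < 2} ∧
        MeromorphicOn (F η) {s : ℂ | -(1 / 2) < s.re} ∧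
        Set.EqOn (F η) (fun s : ℂ => ∑' k : ℕ, coneE1 ω η δ (k + 1) s)
          {s : ℂ | 1 < s.re ∧ s.re < 2} ∧
        AnalyticAt ℂ (F η) 0) ∧
      Tendsto
        (fun η : ℝ => deriv (F η) 0 -
          (2 * (ω : ℂ) * (-riemannZeta (-1) - deriv riemannZeta (-1) +
              riemannZeta (-1) * (Real.log (2 * ω) : ℂ)) +
            ((ω : ℂ) / 6) * (Real.log η : ℂ)))
        (nhdsWithin 0 (Set.Ioi 0)) (nhds 0) := by
  obtain ⟨F, hF, hlim⟩ :=
    statement7_general ω (Nat.cast_pos.2 hω) δ hδ0 (hδ1.le.trans (by norm_num))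
  refine ⟨F, fun η hη => ?_, hlim⟩
  obtain ⟨hsum, hunif, hmero, heq, hana⟩ := hF η hη
  exact ⟨fun s hs => hsum s hs.1, hunif.mono fun _ hs => hs.1, hmero, heq.mono fun _ hs => hs.1,
    hana⟩
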